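/- Fix a, b > 0 and ψ ∈ L²([0,b)). The set {φ♯ψ : φ ∈ L²([0,a))} ⊆ L²([0,a+b)) is gap-rich with empty exceptional set; equivalently, the map (φ,E) ↦ B(φ♯ψ, E), extended multiplicatively to words, is gap-rich with empty exceptional set: for every E ∈ ℝ, every finite word x over L²([0,a)), and every ε > 0, there exists a word y with d(x♯ψ-word, y♯ψ-word) < ε (each letter of y within ε of the corresponding letter of x in L²) such that the transfer matrix of the concatenated word (with ψ inserted after each letter) at energy E is hyperbolic. -/

import Mathlib

/-!
Fix an energy `E` and a periodic word `x` whose letters lie in `{φ♯ψ}`. On a short initial interval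
`[0, δ)` of its first letter, `x` may be overwritten by a constant `E - ω²` with `1 ≤ ω ≤ 2`: this
keeps the letter in `{φ♯ψ}` as long as `δ ≤ a`, and moves it by less than `ε` in `L²` once `δ` is
small. The transfer matrix of the modified word is `R K(ω)`, where `R` is that of the untouched
remainder and `K(ω)` is `freeTM δ ω`. A word made of several such modified copies of `x` is still
`ε`-close to `x`, so it suffices to find a hyperbolic product of matrices `R K(ω)`, and to show
that hyperbolicity removes `E` from the spectrum of the periodic operator.

*Hyperbolicity* (`exists_hyperbolic`). The entries of `K(ω)` are so independent (`trig_indep`) that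
`tr (R K(ω))` is not constant in `ω`. Unless some `R K(ω)` is already hyperbolic, its values fill an
interval inside `[-2, 2]`, hence some `A = R K(ω)` is conjugate to a rotation by an angle `θ` with
`θ / 2π` irrational. By independence again, some `B = R K(ω')` does not commute with `A`. Now
`tr (B Aⁿ)` is a trigonometric function of `nθ` (`pow_trace`), whose amplitude exceeds `2` exactly
when `tr (A B A⁻¹ B⁻¹) > 2`, which holds by the Fricke identity (`fricke_pos`). Density of the
angles `nθ` gives `n` with `|tr (B Aⁿ)| > 2`.

*Spectrum* (`notMem_spectrum_of_hyperbolic`). Let `-g'' + (V - E) g = h` weakly, with `g, h ∈ L²`.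
By `weak_regular`, `g` is a genuine solution. A hyperbolic monodromy matrix has two real
eigenvectors with eigenvalues off the unit circle, which provide two Floquet solutions. The
Wronskians of `g` with them, sampled once per period, are square summable and satisfy a recursion
`λ z (n+1) - z n = f n` with `|λ| ≠ 1` and `f` controlled by `h`. Solving it in `ℓ²` and recovering
`g` from its Wronskians gives `‖g‖ ≤ C ‖h‖` (`apriori`). The weak operator has a closed graph, so
the estimate makes its range closed; it is symmetric on test functions, so the orthogonal complement
of the range consists of weak solutions with `h = 0`, which vanish by the estimate. Hence the
operator has a bounded inverse (`notMem_spectrum_of_bound`).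
-/

open Set MeasureTheory BoundedContinuousFunction

noncomputable section

/-- `L²(ℝ)`. -/
abbrev L2R := Lp ℝ 2 (volume : Measure ℝ)

/-- `L²([0,a))`. -/
abbrev L2I (a : ℝ) := Lp ℝ 2 (volume.restrict (Ico (0 : ℝ) a))

/-- `g` and `h` satisfy `(-d²/dx² + (V - E)) g = h` in the distributional sense. -/
def WeakSchrodingerEq (V : ℝ → ℝ) (E : ℝ) (g h : L2R) : Prop :=
  ∀ φ : ℝ → ℝ, ContDiff ℝ (⊤ : ℕ∞) φ → HasCompactSupport φ →
    ∫ x, g x * (-(deriv (deriv φ) x) + (V x - E) * φ x) = ∫ x, h x * φ x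

/-- The spectrum of the continuum Schrödinger operator `L_V = -d²/dx² + V` on
`L²(ℝ)`: `E` is in the spectrum iff there is no bounded operator `T` inverting
`L_V - E` (in the distributional sense). -/
def ContSpectrum (V : ℝ → ℝ) : Set ℝ :=
  {E : ℝ | ¬ ∃ T : L2R →L[ℝ] L2R,
      (∀ f : L2R, WeakSchrodingerEq V E (T f) f) ∧
      (∀ g h : L2R, WeakSchrodingerEq V E g h → T h = g)}

/-- A subset of ℝ is discrete if it has no accumulation points. -/
def IsDiscreteSet (S : Set ℝ) : Prop := ∀ x : ℝ, ¬ AccPt x (Filter.principal S)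

/-- Periodic extension `w^{♯ℤ}` of a finite word `w`. -/
def perExt {α : Type*} [Zero α] {m : ℕ} (w : Fin m → α) : ℤ → α :=
  fun n =>
    if h : 0 < m then
      w ⟨(n % (m : ℤ)).toNat, by
        have h1 : 0 ≤ n % (m : ℤ) := Int.emod_nonneg n (by exact_mod_cast h.ne')
        have h2 : n % (m : ℤ) < (m : ℤ) := Int.emod_lt_of_pos n (by exact_mod_cast h)
        omega⟩
    else 0

/-- Concatenation `y^♮ : ℝ → ℝ` of a bi-infinite sequence of pieces in
`L²([0,a))`: `y^♮(ja + t) = y_j(t)` for `t ∈ [0,a)`. -/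
def aggC (a : ℝ) (y : ℤ → L2I a) : ℝ → ℝ :=
  fun t => (y ⌊t / a⌋) (t - (⌊t / a⌋ : ℝ) * a)

/-- `Y ⊆ L²([0,a))` is gap-rich with exceptional set `S`. -/
def GapRichC (a : ℝ) (Y : Set (L2I a)) (S : Set ℝ) : Prop :=
  IsDiscreteSet S ∧
  ∀ E : ℝ, E ∉ S → ∀ m : ℕ, 0 < m → ∀ x : Fin m → L2I a, (∀ i, x i ∈ Y) →
    ∀ ε : ℝ, 0 < ε →
      ∃ l : ℕ, 0 < l ∧ ∃ y : Fin l → L2I a,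
        (∀ i, y i ∈ Y) ∧
        (∀ j : ℤ, dist (perExt x j) (perExt y j) < ε) ∧
        E ∉ ContSpectrum (aggC a (perExt y))

/-- The periodic elements of `Y^ℤ`. -/
def PerC (a : ℝ) (Y : Set (L2I a)) : Set (ℤ →ᵇ L2I a) :=
  {x | (∃ q : ℕ, 0 < q ∧ ∀ n : ℤ, x (n + q) = x n) ∧ ∀ n : ℤ, x n ∈ Y}

/-- The limit-periodic elements of `Y^ℤ`. -/
def LPC (a : ℝ) (Y : Set (L2I a)) : Set (ℤ →ᵇ L2I a) := closure (PerC a Y)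

/-- Cantor set of zero Hausdorff dimension (continuum case: closed, possibly
unbounded). -/
def IsZeroDimCantorC (s : Set ℝ) : Prop :=
  s.Nonempty ∧ IsClosed s ∧ Preperfect s ∧ interior s = ∅ ∧ dimH s = 0

/-- The set of concatenations `{φ♯ψ : φ ∈ L²([0,a))} ⊆ L²([0,a+b))`, described
by its almost-everywhere values: on `[0,a)` the element agrees with some
`φ ∈ L²([0,a))`, and on `[a,a+b)` it agrees with `ψ(· - a)`. -/
def concatSet (a b : ℝ) (ψ : L2I b) : Set (L2I (a + b)) :=
  {χ | ∃ φ : L2I a,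
    (∀ᵐ t ∂(volume.restrict (Ico (0 : ℝ) a)), χ t = φ t) ∧
    (∀ᵐ t ∂(volume.restrict (Ico a (a + b))), χ t = ψ (t - a))}

/-! ### Hyperbolic products of transfer matrices -/

/-- The functions `cos (ωδ)`, `sin (ωδ) / ω`, `ω sin (ωδ)` and `1` are linearly independent on
`1 ≤ ω ≤ 2`: after multiplication by `ω` the relation extends analytically to all real `ω`, and is
evaluated where `ωδ` is `π`, `2π`, `π/2` and `3π/2`. -/
lemma trig_indep {δ P Q R k : ℝ} (hδ : 0 < δ)
    (h : ∀ ω ∈ Icc (1 : ℝ) 2, P * Real.cos (ω * δ) + Q * (Real.sin (ω * δ) / ω)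
      + R * (-(ω * Real.sin (ω * δ))) = k) : P = 0 ∧ Q = 0 ∧ R = 0 := by
  let g : ℝ → ℝ := fun ω => P * ω * Real.cos (ω * δ) + Q * Real.sin (ω * δ)
      - R * ω ^ 2 * Real.sin (ω * δ) - k * ω
  have hg : AnalyticOnNhd ℝ g univ := by
    intro x _
    have hd : AnalyticAt ℝ (fun ω : ℝ => ω * δ) x := by fun_prop
    have hs : AnalyticAt ℝ (fun ω : ℝ => Real.sin (ω * δ)) x := Real.analyticAt_sin.comp hd
    have hc : AnalyticAt ℝ (fun ω : ℝ => Real.cos (ω * δ)) x := Real.analyticAt_cos.comp hd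
    fun_prop
  have h0 : ∀ ω, g ω = 0 := by
    have : g =ᶠ[nhds (3/2)] 0 := by
      filter_upwards [Icc_mem_nhds (show (1:ℝ) < 3/2 by norm_num) (show (3/2:ℝ) < 2 by norm_num)]
        with ω hω
      have := h ω hω
      have hω0 : ω ≠ 0 := by linarith [hω.1]
      simp only [g, Pi.zero_apply]
      rw [← this]
      field_simp
      ring
    intro ω
    exact congrFun (hg.eq_of_eventuallyEq analyticOnNhd_const this) ω
  have hπ := Real.pi_pos
  have e1 := h0 (Real.pi / δ)
  have e2 := h0 (2 * Real.pi / δ)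
  have e3 := h0 (Real.pi / 2 / δ)
  have e4 := h0 ((Real.pi / 2 + Real.pi) / δ)
  simp only [g, div_mul_cancel₀ _ hδ.ne', Real.cos_pi, Real.sin_pi, Real.cos_two_pi,
    Real.sin_two_pi, Real.cos_pi_div_two, Real.sin_pi_div_two, Real.cos_add_pi, Real.sin_add_pi] at e1 e2 e3 e4
  have k1 : P + k = 0 := by
    have : (P + k) * (Real.pi / δ) = 0 := by linarith
    exact (mul_eq_zero.1 this).resolve_right (by positivity)
  have k2 : P - k = 0 := by
    have : (P - k) * (2 * Real.pi / δ) = 0 := by linarith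
    exact (mul_eq_zero.1 this).resolve_right (by positivity)
  have hP : P = 0 := by linarith
  have hk : k = 0 := by linarith
  subst hP hk
  have hR : R * ((Real.pi / 2 + Real.pi) ^ 2 - (Real.pi / 2)^2) / δ ^ 2 = 0 := by
    have : R * ((Real.pi / 2 + Real.pi) / δ) ^ 2 - R * (Real.pi / 2 / δ)^2 = 0 := by linarith
    rw [← this]; field_simp
  have hR0 : R = 0 := by
    have h3 : 0 < ((Real.pi / 2 + Real.pi) ^ 2 - (Real.pi / 2)^2) / δ ^ 2 := by
      apply div_pos _ (by positivity); nlinarith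
    rw [mul_div_assoc] at hR
    exact (mul_eq_zero.1 hR).resolve_right h3.ne'
  subst hR0
  exact ⟨rfl, by linarith, rfl⟩

/-- The transfer matrix of `-u'' = ω² u` over an interval of length `δ`, acting on Cauchy data
`(u, u')`. -/
def freeTM (δ ω : ℝ) : Matrix (Fin 2) (Fin 2) ℝ :=
  !![Real.cos (ω * δ), Real.sin (ω * δ) / ω; -(ω * Real.sin (ω * δ)), Real.cos (ω * δ)]

/-- If `A = (a b; c d)` is elliptic and does not commute with `B = (e f; g h)`, both in `SL(2,ℝ)`,
then the commutator of `A` and `B` has trace greater than `2`. By the Fricke identity that trace,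
minus `2`, is the displayed polynomial in the traces of `A`, `B` and `AB`. -/
lemma fricke_pos {a b c d e f g h : ℝ} (hA : a * d - b * c = 1) (hB : e * h - f * g = 1)
    (hell : (a + d) ^ 2 < 4)
    (hne : ¬ (b * g = c * f ∧ a * f + b * h = e * b + f * d ∧ c * e + d * g = g * a + h * c)) :
    0 < (a + d) ^ 2 + (e + h) ^ 2 + (a * e + b * g + c * f + d * h) ^ 2
      - (a + d) * (e + h) * (a * e + b * g + c * f + d * h) - 4 := by
  set x := b * g - c * f with hx
  set y := a * f + b * h - (e * b + f * d) with hy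
  set z := c * e + d * g - (g * a + h * c) with hz
  -- `(x y; z -x)` is the matrix `AB - BA`, and the polynomial is minus its determinant
  have key : (a + d) ^ 2 + (e + h) ^ 2 + (a * e + b * g + c * f + d * h) ^ 2
      - (a + d) * (e + h) * (a * e + b * g + c * f + d * h) - 4 = x ^ 2 + y * z := by
    have hA' : a * d = 1 + b * c := by linarith
    have hB' : e * h = 1 + f * g := by linarith
    simp only [hx, hy, hz]
    grind
  -- `tr (A (AB - BA)) = 0`; the quadratic form `x² + yz` is positive on this plane since `A` is elliptic
  have rel : x * (a - d) + y * c + z * b = 0 := by simp only [hx, hy, hz]; ring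
  have disc : (a - d) ^ 2 + 4 * (b * c) < 0 := by nlinarith
  have hc : c ≠ 0 := by rintro rfl; nlinarith [sq_nonneg (a - d)]
  rw [key]
  have hpos : 0 < c ^ 2 * (x ^ 2 + y * z) ∨ (x = 0 ∧ z = 0) := by
    by_cases hz0 : z = 0
    · by_cases hx0 : x = 0
      · exact Or.inr ⟨hx0, hz0⟩
      · left; rw [hz0]; have := mul_pos (pow_two_pos_of_ne_zero hc) (pow_two_pos_of_ne_zero hx0)
        linarith
    · left
      have e : c ^ 2 * (x ^ 2 + y * z) = (c * x - z * (a - d) / 2) ^ 2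
          - z ^ 2 * ((a - d) ^ 2 + 4 * (b * c)) / 4 := by
        have : y * c = - (x * (a - d)) - z * b := by linarith
        calc c ^ 2 * (x ^ 2 + y * z) = c ^ 2 * x ^ 2 + c * z * (y * c) := by ring
          _ = _ := by rw [this]; ring
      rw [e]
      have := mul_pos (pow_two_pos_of_ne_zero hz0) (neg_pos.2 disc)
      nlinarith [sq_nonneg (c * x - z * (a - d) / 2)]
  rcases hpos with h1 | ⟨h1, h2⟩
  · exact (pos_iff_pos_of_mul_pos h1).1 (by positivity)
  · exfalso; apply hne
    have hy0 : y * c = 0 := by rw [h1, h2] at rel; linarith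
    have hy1 : y = 0 := (mul_eq_zero.1 hy0).resolve_right hc
    exact ⟨by linarith, by linarith, by linarith⟩

/-- For `A` a rotation by `θ` up to conjugacy, `n ↦ tr (B Aⁿ)` is a trigonometric function of
`nθ`, by the Cayley-Hamilton theorem. The factor `sin θ` on the left avoids a division. -/
lemma pow_trace {A B : Matrix (Fin 2) (Fin 2) ℝ} {θ : ℝ} (hA : A.det = 1)
    (ht : A.trace = 2 * Real.cos θ) (n : ℕ) :
    Real.sin θ * (B * A ^ n).trace = Real.sin (n * θ) * ((B * A).trace - B.trace * Real.cos θ)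
      + Real.cos (n * θ) * (B.trace * Real.sin θ) := by
  have ch : A * A = (2 * Real.cos θ) • A - 1 := by
    have h1 : A 0 0 + A 1 1 = 2 * Real.cos θ := by rw [← ht, Matrix.trace_fin_two]
    have h2 := hA
    rw [Matrix.det_fin_two] at h2
    rw [← h1]
    ext i j
    fin_cases i <;> fin_cases j <;> simp [Matrix.mul_apply, Fin.sum_univ_two] <;> linarith
  have key : ∀ n : ℕ, Real.sin θ • A ^ n = Real.sin (n * θ) • A - (Real.sin (n * θ) * Real.cos θ - Real.cos (n*θ) * Real.sin θ) • (1 : Matrix (Fin 2) (Fin 2) ℝ) := by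
    intro n
    induction n with
    | zero => simp
    | succ n ih =>
      rw [pow_succ, ← smul_mul_assoc, ih, sub_mul, smul_mul_assoc, ch, smul_mul_assoc, one_mul]
      push_cast
      rw [add_mul, one_mul, Real.sin_add, Real.cos_add]
      ext i j
      have hs := Real.sin_sq_add_cos_sq θ
      by_cases hij : i = j
      · subst hij
        simp
        linear_combination (Real.sin (n * θ)) * hs
      · simp [hij]
        ring
  have := congrArg (fun M => (B * M).trace) (key n)
  simp only [Matrix.mul_smul, Matrix.trace_smul, mul_sub, Matrix.trace_sub, smul_eq_mul, mul_one] at this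
  rw [this]; ring

/-- Since the multiples `nθ` are dense modulo `2π`, the trigonometric function
`α sin + β cos` comes arbitrarily close to its maximum `√(α² + β²)` along them. -/
lemma exists_nat_trig {θ α β c : ℝ} (hθ : Irrational (θ / (2 * Real.pi)))
    (hc : 0 ≤ c) (hab : c ^ 2 < α ^ 2 + β ^ 2) :
    ∃ n : ℕ, c < Real.sin (n * θ) * α + Real.cos (n * θ) * β := by
  have : Fact (0 < 2 * Real.pi) := ⟨Real.two_pi_pos⟩
  have hd : DenseRange (fun n : ℕ => n • (θ : AddCircle (2 * Real.pi))) :=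
    denseRange_zsmul_iff_nsmul.1 (AddCircle.denseRange_zsmul_coe_iff.2 hθ)
  let w : ℂ := ⟨β, α⟩
  let F : Real.Angle → ℝ := fun t => t.sin * α + t.cos * β
  have hF : Continuous F := by
    apply Continuous.add
    · exact Real.Angle.continuous_sin.mul continuous_const
    · exact Real.Angle.continuous_cos.mul continuous_const
  have hw : c < ‖w‖ := by
    apply lt_of_pow_lt_pow_left₀ 2 (norm_nonneg _)
    rw [← Complex.normSq_eq_norm_sq, Complex.normSq_mk]; linarith
  have hFw : c < F (w.arg : Real.Angle) := by
    have hw0 : w ≠ 0 := by rintro h; rw [h, norm_zero] at hw; linarith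
    simp only [F, Real.Angle.sin_coe, Real.Angle.cos_coe]
    rw [Complex.sin_arg, Complex.cos_arg hw0]
    have hn : (0:ℝ) < ‖w‖ := lt_of_le_of_lt hc hw
    have : α ^ 2 + β ^ 2 = ‖w‖ ^ 2 := by
      rw [← Complex.normSq_eq_norm_sq, Complex.normSq_mk]; ring
    have : w.im / ‖w‖ * α + w.re / ‖w‖ * β = ‖w‖ := by
      field_simp; simp only [w] at this ⊢; nlinarith
    rw [this]; exact hw
  obtain ⟨n, hn⟩ := hd.exists_mem_open (isOpen_lt continuous_const hF) ⟨_, hFw⟩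
  refine ⟨n, ?_⟩
  have h2 : (n • (θ : AddCircle (2 * Real.pi)) : AddCircle (2 * Real.pi)) = ((n * θ : ℝ) : Real.Angle) := by
    rw [← nsmul_eq_mul]; rfl
  simp only [mem_ofPred_eq] at hn
  rw [h2] at hn
  simpa only [F, Real.Angle.sin_coe, Real.Angle.cos_coe] using hn

lemma freeTM_det {δ ω : ℝ} (hω : ω ≠ 0) : (freeTM δ ω).det = 1 := by
  rw [freeTM, Matrix.det_fin_two_of]
  field_simp
  linarith [Real.sin_sq_add_cos_sq (ω * δ)]

/-- A linear functional that is constant along `ω ↦ freeTM δ ω` vanishes on the span of these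
matrices, which consists of the matrices with equal diagonal entries. -/
lemma freeTM_functional {δ k : ℝ} (hδ : 0 < δ) (ℓ : Matrix (Fin 2) (Fin 2) ℝ →ₗ[ℝ] ℝ)
    (h : ∀ ω ∈ Icc (1 : ℝ) 2, ℓ (freeTM δ ω) = k) :
    ℓ 1 = 0 ∧ ℓ !![0, 1; 0, 0] = 0 ∧ ℓ !![0, 0; 1, 0] = 0 := by
  apply trig_indep hδ (k := k)
  intro ω hω
  rw [← h ω hω]
  have : freeTM δ ω = Real.cos (ω * δ) • 1 + (Real.sin (ω * δ) / ω) • !![0, 1; 0, 0]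
    + (-(ω * Real.sin (ω * δ))) • !![0, 0; 1, 0] := by
    ext i j
    fin_cases i <;> fin_cases j <;> simp [freeTM]
  rw [this]
  simp only [map_add, map_smul, smul_eq_mul]
  ring

lemma freeTM_continuousOn (δ : ℝ) (R : Matrix (Fin 2) (Fin 2) ℝ) :
    ContinuousOn (fun ω => (R * freeTM δ ω).trace) (Icc 1 2) := by
  have : ∀ ω, (R * freeTM δ ω).trace = R 0 0 * Real.cos (ω * δ) + R 0 1 * (-(ω * Real.sin (ω * δ)))
      + (R 1 0 * (Real.sin (ω * δ) / ω) + R 1 1 * Real.cos (ω * δ)) := by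
    intro ω
    simp [freeTM, Matrix.trace_fin_two, Matrix.mul_apply, Fin.sum_univ_two]
  simp_rw [this]
  have h0 : ∀ ω ∈ Icc (1:ℝ) 2, ω ≠ 0 := fun ω hω => by linarith [hω.1]
  have h1 : ContinuousOn (fun ω : ℝ => Real.sin (ω * δ) / ω) (Icc 1 2) :=
    ContinuousOn.div (by fun_prop) (by fun_prop) h0
  fun_prop

/-- For every `R ∈ SL(2,ℝ)` some product of the matrices `R * freeTM δ ω`, `1 ≤ ω ≤ 2`, is
hyperbolic. If no single one is, their traces fill a nontrivial interval in `[-2, 2]`, so some `A`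
among them is an irrational rotation; some `B` among them does not commute with `A`, and then
`B Aⁿ` is hyperbolic for a suitable `n`. -/
theorem exists_hyperbolic {δ : ℝ} (hδ : 0 < δ) (R : Matrix (Fin 2) (Fin 2) ℝ) (hR : R.det = 1) :
    ∃ ωA ∈ Icc (1 : ℝ) 2, ∃ ωB ∈ Icc (1 : ℝ) 2, ∃ n : ℕ,
      2 < |(R * freeTM δ ωB * (R * freeTM δ ωA) ^ n).trace| := by
  by_contra! hcon
  let f : ℝ → ℝ := fun ω => (R * freeTM δ ω).trace
  have hfc : ContinuousOn f (Icc 1 2) := freeTM_continuousOn δ R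
  have hdet : ∀ ω ∈ Icc (1:ℝ) 2, (R * freeTM δ ω).det = 1 := by
    intro ω hω
    rw [Matrix.det_mul, hR, freeTM_det (by linarith [hω.1]), one_mul]
  have hf2 : ∀ ω ∈ Icc (1:ℝ) 2, |f ω| ≤ 2 := by
    intro ω hω
    simpa using hcon ω hω ω hω 0
  -- the trace is not constant
  have hnc : ∃ ω₁ ∈ Icc (1:ℝ) 2, ∃ ω₂ ∈ Icc (1:ℝ) 2, f ω₁ < f ω₂ := by
    by_contra! hc
    have hk : ∀ ω ∈ Icc (1 : ℝ) 2, f ω = f 1 := fun ω hω =>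
      le_antisymm (hc 1 (by simp) ω hω) (hc ω hω 1 (by simp))
    obtain ⟨h1, h2, h3⟩ := freeTM_functional hδ
      (Matrix.traceLinearMap (Fin 2) ℝ ℝ ∘ₗ LinearMap.mulLeft ℝ R) hk
    simp [Matrix.trace_fin_two, Matrix.mul_apply, Fin.sum_univ_two] at h1 h2 h3
    rw [Matrix.det_fin_two, h2, h3, show R 1 1 = -R 0 0 by linarith] at hR
    nlinarith [sq_nonneg (R 0 0)]
  obtain ⟨ω₁, hω₁, ω₂, hω₂, hlt⟩ := hnc
  have b1 := abs_le.1 (hf2 ω₁ hω₁)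
  have b2 := abs_le.1 (hf2 ω₂ hω₂)
  have hπ := Real.pi_pos
  have hacos : Real.arccos (f ω₂ / 2) < Real.arccos (f ω₁ / 2) :=
    Real.strictAntiOn_arccos ⟨by linarith, by linarith⟩ ⟨by linarith, by linarith⟩ (by linarith)
  obtain ⟨r, hr, hr1, hr2⟩ := exists_irrational_btwn
    (show Real.arccos (f ω₂ / 2) / (2 * Real.pi) < Real.arccos (f ω₁ / 2) / (2 * Real.pi) by gcongr)
  set θ := r * (2 * Real.pi) with hθ
  rw [div_lt_iff₀ (by positivity)] at hr1
  rw [lt_div_iff₀ (by positivity)] at hr2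
  have hθ0 : 0 < θ := lt_of_le_of_lt (Real.arccos_nonneg _) hr1
  have hθπ : θ < Real.pi := lt_of_lt_of_le hr2 (Real.arccos_le_pi _)
  have c1 : f ω₁ < 2 * Real.cos θ := by
    have := Real.cos_lt_cos_of_nonneg_of_le_pi hθ0.le (Real.arccos_le_pi _) hr2
    rw [Real.cos_arccos (by linarith) (by linarith)] at this; linarith
  have c2 : 2 * Real.cos θ < f ω₂ := by
    have := Real.cos_lt_cos_of_nonneg_of_le_pi (Real.arccos_nonneg _) hθπ.le hr1
    rw [Real.cos_arccos (by linarith) (by linarith)] at this; linarith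
  obtain ⟨ωA, hωA, hfA⟩ := (isPreconnected_Icc.image f hfc).ordConnected.out
    (mem_image_of_mem f hω₁) (mem_image_of_mem f hω₂) ⟨c1.le, c2.le⟩
  set A := R * freeTM δ ωA with hAdef
  have hAdet : A.det = 1 := hdet ωA hωA
  have hAtr : A.trace = 2 * Real.cos θ := hfA
  have hsin : 0 < Real.sin θ := Real.sin_pos_of_pos_of_lt_pi hθ0 hθπ
  have hsc := Real.sin_sq_add_cos_sq θ
  have hAdet' : A 0 0 * A 1 1 - A 0 1 * A 1 0 = 1 := by rw [← hAdet, Matrix.det_fin_two]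
  have hAtr' : A 0 0 + A 1 1 = 2 * Real.cos θ := by rw [← hAtr, Matrix.trace_fin_two]
  have hell : (A 0 0 + A 1 1) ^ 2 < 4 := by
    rw [hAtr']; nlinarith [pow_pos hsin 2]
  -- some block does not commute with `A`
  have hB : ∃ ωB ∈ Icc (1:ℝ) 2, A * (R * freeTM δ ωB) ≠ (R * freeTM δ ωB) * A := by
    by_contra! hcomm
    have hfun : ∀ i j, ∀ X ∈ ({1, !![0, 1; 0, 0], !![0, 0; 1, 0]} : Set (Matrix (Fin 2) (Fin 2) ℝ)),
        (A * (R * X)) i j - ((R * X) * A) i j = 0 := by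
      intro i j
      let ℓ : Matrix (Fin 2) (Fin 2) ℝ →ₗ[ℝ] ℝ :=
        { toFun := fun X => (A * (R * X)) i j - ((R * X) * A) i j
          map_add' := by intro X Y; simp [mul_add, add_mul]; ring
          map_smul' := by intro c X; simp; ring }
      obtain ⟨h1, h2, h3⟩ := freeTM_functional (k := 0) hδ ℓ (by
        intro ω hω
        simp only [ℓ, LinearMap.coe_mk, AddHom.coe_mk]
        rw [hcomm ω hω, sub_self])
      rintro X (rfl | rfl | rfl)
      exacts [h1, h2, h3]
    have hX : ∀ X ∈ ({1, !![0, 1; 0, 0], !![0, 0; 1, 0]} : Set (Matrix (Fin 2) (Fin 2) ℝ)),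
        A * (R * X) = (R * X) * A := by
      intro X hX; ext i j; exact sub_eq_zero.1 (hfun i j X hX)
    have hAR : A * R = R * A := by simpa using hX 1 (by simp)
    have hX2 : ∀ X ∈ ({1, !![0, 1; 0, 0], !![0, 0; 1, 0]} : Set (Matrix (Fin 2) (Fin 2) ℝ)),
        A * X = X * A := by
      intro X hX'
      have h : R * (A * X) = R * (X * A) := by
        rw [← mul_assoc R A X, ← hAR, mul_assoc A R X, hX X hX', mul_assoc R X A]
      have hu : IsUnit R := (Matrix.isUnit_iff_isUnit_det R).2 (by rw [hR]; exact isUnit_one)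
      exact hu.mul_left_cancel h
    have e1 := congrFun (congrFun (hX2 !![0, 1; 0, 0] (by simp)) 0) 0
    have e2 := congrFun (congrFun (hX2 !![0, 1; 0, 0] (by simp)) 0) 1
    simp [Matrix.mul_apply, Fin.sum_univ_two] at e1 e2
    rw [← e1, e2] at hAdet'
    rw [e2] at hell
    nlinarith
  obtain ⟨ωB, hωB, hne⟩ := hB
  set B := R * freeTM δ ωB with hBdef
  have hBdet : B.det = 1 := hdet ωB hωB
  have hBdet' : B 0 0 * B 1 1 - B 0 1 * B 1 0 = 1 := by rw [← hBdet, Matrix.det_fin_two]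
  have hpos := fricke_pos hAdet' hBdet' hell (by
    rintro ⟨h1, h2, h3⟩
    apply hne
    ext i j
    fin_cases i <;> fin_cases j <;> simp [Matrix.mul_apply, Fin.sum_univ_two] <;> linarith)
  have hr' : Irrational (θ / (2 * Real.pi)) := by
    rw [hθ, mul_div_cancel_right₀ _ (by positivity)]; exact hr
  have htBA : (B * A).trace = A 0 0 * B 0 0 + A 0 1 * B 1 0 + A 1 0 * B 0 1 + A 1 1 * B 1 1 := by
    simp [Matrix.trace_fin_two, Matrix.mul_apply, Fin.sum_univ_two]; ring
  obtain ⟨n, hn⟩ := exists_nat_trig (c := 2 * Real.sin θ)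
    (α := (B * A).trace - B.trace * Real.cos θ) (β := B.trace * Real.sin θ) hr' (by positivity) (by
      rw [← htBA, hAtr', ← Matrix.trace_fin_two] at hpos
      have : Real.sin θ ^ 2 = 1 - Real.cos θ ^ 2 := by linarith
      rw [mul_pow, mul_pow, this]
      nlinarith)
  rw [← pow_trace hAdet hAtr n, mul_comm, mul_lt_mul_iff_right₀ hsin] at hn
  exact absurd (hcon ωA hωA ωB hωB n) (not_le.2 (lt_of_lt_of_le hn (le_abs_self _)))

/-! ### Solutions of the Schrödinger equation and transfer matrices -/

/-- `u` solves `-u'' + q u = h` on `[s, t]` in the Carathéodory sense, with `v = u'`. Both `u` and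
`v` are required to be continuous on the whole line, but only their values on `[s, t]` matter. -/
structure IsSol (q h : ℝ → ℝ) (s t : ℝ) (u v : ℝ → ℝ) : Prop where
  cu : Continuous u
  cv : Continuous v
  eu : ∀ x ∈ Icc s t, u x = u s + ∫ r in s..x, v r
  ev : ∀ x ∈ Icc s t, v x = v s + ∫ r in s..x, (q r * u r - h r)

lemma ii_zero (a b : ℝ) : IntervalIntegrable (0 : ℝ → ℝ) volume a b :=
  continuous_zero.intervalIntegrable a b

/-- The product rule, in integrated form, for primitives of integrable functions. -/
lemma prod_integral {F f K k : ℝ → ℝ} {s x : ℝ} (hsx : s ≤ x)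
    (hf : IntervalIntegrable f volume s x) (hk : IntervalIntegrable k volume s x)
    (hF : ∀ y ∈ Icc s x, F y = F s + ∫ r in s..y, f r)
    (hK : ∀ y ∈ Icc s x, K y = K s + ∫ r in s..y, k r) :
    F x * K x = F s * K s + ∫ r in s..x, (f r * K r + F r * k r) := by
  have acF : AbsolutelyContinuousOnInterval (fun y => F s + ∫ r in s..y, f r) s x :=
    (contDiff_const.contDiffOn.absolutelyContinuousOnInterval).add
      (hf.absolutelyContinuousOnInterval_intervalIntegral (by simp))
  have acK : AbsolutelyContinuousOnInterval (fun y => K s + ∫ r in s..y, k r) s x :=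
    (contDiff_const.contDiffOn.absolutelyContinuousOnInterval).add
      (hk.absolutelyContinuousOnInterval_intervalIntegral (by simp))
  have := acF.integral_deriv_mul_eq_sub acK
  simp only [← hF x ⟨hsx, le_rfl⟩, ← hK x ⟨hsx, le_rfl⟩, intervalIntegral.integral_same, add_zero] at this
  rw [← sub_eq_iff_eq_add', ← this]
  apply intervalIntegral.integral_congr_ae
  filter_upwards [hf.ae_hasDerivAt_integral, hk.ae_hasDerivAt_integral] with y h1 h2 hy
  have hy' : y ∈ uIcc s x := uIoc_subset_uIcc hy
  have hyI : y ∈ Icc s x := by rwa [uIcc_of_le hsx] at hy'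
  have d1 := ((h1 hy' s (by simp)).const_add (F s)).deriv
  have d2 := ((h2 hy' s (by simp)).const_add (K s)).deriv
  simp only [d1, d2, ← hF y hyI, ← hK y hyI]

/-- The Wronskian of a solution `g` of the inhomogeneous equation with a solution `u` of the
homogeneous one is a primitive of `h u`. -/
lemma wronskian {q h u v g g1 : ℝ → ℝ} {s t : ℝ}
    (hq : ∀ s t, IntervalIntegrable q volume s t) (hh : ∀ s t, IntervalIntegrable h volume s t)
    (hu : IsSol q 0 s t u v) (hg : IsSol q h s t g g1) {x : ℝ} (hx : x ∈ Icc s t) :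
    g x * v x - g1 x * u x = g s * v s - g1 s * u s + ∫ r in s..x, h r * u r := by
  have hsub : ∀ y ∈ Icc s x, y ∈ Icc s t := fun y hy => ⟨hy.1, hy.2.trans hx.2⟩
  have iv : ∀ a b, IntervalIntegrable v volume a b := fun a b => hu.cv.intervalIntegrable a b
  have ig : ∀ a b, IntervalIntegrable g1 volume a b := fun a b => hg.cv.intervalIntegrable a b
  have iqu : ∀ a b, IntervalIntegrable (fun r => q r * u r - (0 : ℝ → ℝ) r) volume a b := fun a b =>
    ((hq a b).mul_continuousOn hu.cu.continuousOn).sub (ii_zero _ _)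
  have iqg : ∀ a b, IntervalIntegrable (fun r => q r * g r - h r) volume a b := fun a b =>
    ((hq a b).mul_continuousOn hg.cu.continuousOn).sub (hh a b)
  have p1 := prod_integral hx.1 (ig _ _) (iqu _ _) (fun y hy => hg.eu y (hsub y hy))
    (fun y hy => hu.ev y (hsub y hy))
  have p2 := prod_integral hx.1 (iqg _ _) (iv _ _) (fun y hy => hg.ev y (hsub y hy))
    (fun y hy => hu.eu y (hsub y hy))
  rw [p1, p2]
  have : ∫ r in s..x, h r * u r = (∫ r in s..x, (g1 r * v r + g r * (q r * u r - (0 : ℝ → ℝ) r)))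
      - ∫ r in s..x, ((q r * g r - h r) * u r + g1 r * v r) := by
    rw [← intervalIntegral.integral_sub]
    · congr 1; ext r; simp; ring
    · exact ((ig _ _).mul_continuousOn hu.cv.continuousOn).add
        ((iqu _ _).continuousOn_mul hg.cu.continuousOn)
    · exact ((iqg _ _).mul_continuousOn hu.cu.continuousOn).add
        ((ig _ _).mul_continuousOn hu.cv.continuousOn)
  rw [this]; ring

lemma IsSol.lin {q u v u' v' : ℝ → ℝ} {s t : ℝ}
    (hq : ∀ s t, IntervalIntegrable q volume s t)
    (h : IsSol q 0 s t u v) (h' : IsSol q 0 s t u' v') (c c' : ℝ) :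
    IsSol q 0 s t (fun x => c * u x + c' * u' x) (fun x => c * v x + c' * v' x) where
  cu := by have := h.cu; have := h'.cu; fun_prop
  cv := by have := h.cv; have := h'.cv; fun_prop
  eu := by
    intro x hx
    rw [intervalIntegral.integral_add ((h.cv.const_mul c).intervalIntegrable _ _)
      ((h'.cv.const_mul c').intervalIntegrable _ _), intervalIntegral.integral_const_mul,
      intervalIntegral.integral_const_mul, h.eu x hx, h'.eu x hx]
    ring
  ev := by
    intro x hx
    have e : ∀ r, q r * (c * u r + c' * u' r) - (0 : ℝ → ℝ) r =
      c * (q r * u r - (0 : ℝ → ℝ) r) + c' * (q r * u' r - (0 : ℝ → ℝ) r) := by intro r; simp; ring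
    simp_rw [e]
    rw [intervalIntegral.integral_add, intervalIntegral.integral_const_mul,
      intervalIntegral.integral_const_mul, h.ev x hx, h'.ev x hx]
    · ring
    · exact (((hq s x).mul_continuousOn h.cu.continuousOn).sub (ii_zero _ _)).const_mul c
    · exact (((hq s x).mul_continuousOn h'.cu.continuousOn).sub (ii_zero _ _)).const_mul c'

lemma IsSol.glue {q u v u' v' : ℝ → ℝ} {s t r : ℝ} (hst : s ≤ t)
    (hq : ∀ s t, IntervalIntegrable q volume s t)
    (h : IsSol q 0 s t u v) (h' : IsSol q 0 t r u' v') (eu : u t = u' t) (ev : v t = v' t) :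
    IsSol q 0 s r (fun x => if x ≤ t then u x else u' x) (fun x => if x ≤ t then v x else v' x) := by
  have cu : Continuous (fun x => if x ≤ t then u x else u' x) :=
    Continuous.if_le h.cu h'.cu continuous_id continuous_const (by rintro x rfl; exact eu)
  have cv : Continuous (fun x => if x ≤ t then v x else v' x) :=
    Continuous.if_le h.cv h'.cv continuous_id continuous_const (by rintro x rfl; exact ev)
  have key : ∀ F G : ℝ → ℝ, ∀ x ≤ t, s ≤ x →
      ∫ y in s..x, (if y ≤ t then F y else G y) = ∫ y in s..x, F y := by
    intro F G x hx hsx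
    apply intervalIntegral.integral_congr
    intro y hy
    rw [uIcc_of_le hsx] at hy
    simp [hy.2.trans hx]
  have key2 : ∀ F G : ℝ → ℝ, ∀ x, t ≤ x →
      ∫ y in t..x, (if y ≤ t then F y else G y) = ∫ y in t..x, G y := by
    intro F G x hx
    apply intervalIntegral.integral_congr_ae
    filter_upwards with y hy
    rw [uIoc_of_le hx] at hy
    simp [not_le.2 hy.1]
  have iq : ∀ a b, IntervalIntegrable (fun y => q y * (if y ≤ t then u y else u' y) - (0 : ℝ → ℝ) y)
      volume a b := fun a b => ((hq a b).mul_continuousOn cu.continuousOn).sub (ii_zero _ _)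
  have e : ∀ y, q y * (if y ≤ t then u y else u' y) - (0 : ℝ → ℝ) y =
      if y ≤ t then (q y * u y - (0 : ℝ → ℝ) y) else (q y * u' y - (0 : ℝ → ℝ) y) := by
    intro y; split_ifs <;> rfl
  refine ⟨cu, cv, ?_, ?_⟩
  · intro x hx
    by_cases hxt : x ≤ t
    · simp only [hxt, hst, if_true]
      rw [key _ _ x hxt hx.1]
      exact h.eu x ⟨hx.1, hxt⟩
    · simp only [hxt, hst, if_true, if_false]
      rw [← intervalIntegral.integral_add_adjacent_intervals (b := t) (cv.intervalIntegrable _ _)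
        (cv.intervalIntegrable _ _), key _ _ t le_rfl hst, key2 _ _ x (not_le.1 hxt).le,
        h'.eu x ⟨(not_le.1 hxt).le, hx.2⟩, ← eu, h.eu t ⟨hst, le_rfl⟩]
      ring
  · intro x hx
    by_cases hxt : x ≤ t
    · simp only [hxt, hst, if_true]
      simp_rw [e]
      rw [key _ _ x hxt hx.1]
      exact h.ev x ⟨hx.1, hxt⟩
    · simp only [hxt, hst, if_true, if_false]
      rw [← intervalIntegral.integral_add_adjacent_intervals (b := t) (iq _ _) (iq _ _)]
      simp_rw [e]
      rw [key _ _ t le_rfl hst, key2 _ _ x (not_le.1 hxt).le,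
        h'.ev x ⟨(not_le.1 hxt).le, hx.2⟩, ← ev, h.ev t ⟨hst, le_rfl⟩]
      ring

/-- `P` is the transfer matrix of `-u'' + q u = 0` from `s` to `t`: each vector `z` of Cauchy data
at `s` is attained by a solution whose Cauchy data at `t` are `P z`. -/
def Transfer (q : ℝ → ℝ) (s t : ℝ) (P : Matrix (Fin 2) (Fin 2) ℝ) : Prop :=
  ∀ z : Fin 2 → ℝ, ∃ u v : ℝ → ℝ, IsSol q 0 s t u v ∧ ![u s, v s] = z ∧ ![u t, v t] = P.mulVec z

lemma Transfer.comp {q : ℝ → ℝ} {s t r : ℝ} {P Q : Matrix (Fin 2) (Fin 2) ℝ}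
    (hst : s ≤ t) (htr : t ≤ r)
    (hq : ∀ s t, IntervalIntegrable q volume s t)
    (hP : Transfer q s t P) (hQ : Transfer q t r Q) : Transfer q s r (Q * P) := by
  intro z
  obtain ⟨u, v, h, h1, h2⟩ := hP z
  obtain ⟨u', v', h', h1', h2'⟩ := hQ (P.mulVec z)
  rw [← h2] at h1'
  have eu : u t = u' t := (congrFun h1' 0).symm
  have ev : v t = v' t := (congrFun h1' 1).symm
  refine ⟨_, _, h.glue hst hq h' eu ev, ?_, ?_⟩
  · simpa [hst] using h1
  · rw [← Matrix.mulVec_mulVec, ← h2']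
    by_cases hrt : r ≤ t
    · obtain rfl : t = r := le_antisymm htr hrt
      simp [eu, ev]
    · simp [hrt]

lemma Transfer.refl (q : ℝ → ℝ) (s : ℝ) : Transfer q s s 1 := by
  intro z
  refine ⟨fun _ => z 0, fun _ => z 1, ⟨continuous_const, continuous_const, ?_, ?_⟩, ?_, ?_⟩
  · intro x hx; obtain rfl : x = s := le_antisymm hx.2 hx.1; simp
  · intro x hx; obtain rfl : x = s := le_antisymm hx.2 hx.1; simp
  · ext i; fin_cases i <;> rfl
  · rw [Matrix.one_mulVec]; ext i; fin_cases i <;> rfl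

lemma Transfer.congr {q q' : ℝ → ℝ} {s t : ℝ} {P : Matrix (Fin 2) (Fin 2) ℝ}
    (hP : Transfer q s t P) (h : ∀ᵐ x, x ∈ Ioo s t → q x = q' x) : Transfer q' s t P := by
  intro z
  obtain ⟨u, v, hs, h1, h2⟩ := hP z
  refine ⟨u, v, ⟨hs.cu, hs.cv, hs.eu, ?_⟩, h1, h2⟩
  intro x hx
  rw [hs.ev x hx]
  congr 1
  apply intervalIntegral.integral_congr_ae
  have ht : ∀ᵐ y : ℝ, y ≠ t := by simp [ae_iff]
  filter_upwards [h, ht] with y hy hyt hyx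
  rw [uIoc_of_le hx.1] at hyx
  rw [hy ⟨hyx.1, lt_of_le_of_ne (hyx.2.trans hx.2) hyt⟩]

lemma Transfer.shift {q q' : ℝ → ℝ} {s t : ℝ} {P : Matrix (Fin 2) (Fin 2) ℝ} (c : ℝ)
    (h : ∀ᵐ x, x ∈ Ioo s t → q x = q' (x + c))
    (hP : Transfer q s t P) : Transfer q' (s + c) (t + c) P := by
  intro z
  obtain ⟨u, v, hs, h1, h2⟩ := (hP.congr h) z
  refine ⟨fun x => u (x - c), fun x => v (x - c), ⟨?_, ?_, ?_, ?_⟩, by simpa using h1, by simpa using h2⟩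
  · exact hs.cu.comp (continuous_sub_right c)
  · exact hs.cv.comp (continuous_sub_right c)
  · intro x hx
    have := hs.eu (x - c) ⟨by linarith [hx.1], by linarith [hx.2]⟩
    rw [intervalIntegral.integral_comp_sub_right]
    simpa using this
  · intro x hx
    have := hs.ev (x - c) ⟨by linarith [hx.1], by linarith [hx.2]⟩
    have e := intervalIntegral.integral_comp_sub_right (a := s + c) (b := x)
      (fun y => q' (y + c) * u y - (0 : ℝ → ℝ) y) c
    simp only [sub_add_cancel, add_sub_cancel_right] at e
    simp only [add_sub_cancel_right]
    rw [this, ← e]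
    rfl

/-- A transfer matrix has determinant `1`, because the Wronskian is constant. -/
lemma Transfer.det {q : ℝ → ℝ} {s t : ℝ} {P : Matrix (Fin 2) (Fin 2) ℝ} (hst : s ≤ t)
    (hq : ∀ s t, IntervalIntegrable q volume s t)
    (hP : Transfer q s t P) : P.det = 1 := by
  obtain ⟨u, v, hs, h1, h2⟩ := hP ![1, 0]
  obtain ⟨u', v', hs', h1', h2'⟩ := hP ![0, 1]
  have w := wronskian (h := 0) hq ii_zero hs' hs (x := t) ⟨hst, le_rfl⟩
  have a1 := congrFun h1 0
  have a2 := congrFun h1 1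
  have b1 := congrFun h1' 0
  have b2 := congrFun h1' 1
  have c1 := congrFun h2 0
  have c2 := congrFun h2 1
  have d1 := congrFun h2' 0
  have d2 := congrFun h2' 1
  simp [Matrix.mulVec, dotProduct, Fin.sum_univ_two] at a1 a2 b1 b2 c1 c2 d1 d2
  rw [Matrix.det_fin_two]
  simp [a1, a2, b1, b2, c1, c2, d1, d2] at w
  linarith

/-- The matrix displayed here is `freeTM δ ω`. -/
lemma transfer_free {δ ω : ℝ} (hω : ω ≠ 0) :
    Transfer (fun _ => -ω ^ 2) 0 δ
     (!![Real.cos (ω * δ), Real.sin (ω * δ) / ω; -(ω * Real.sin (ω * δ)), Real.cos (ω * δ)]) := by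
  intro z
  let u : ℝ → ℝ := fun x => z 0 * Real.cos (ω * x) + z 1 * (Real.sin (ω * x) / ω)
  let v : ℝ → ℝ := fun x => z 0 * (-(ω * Real.sin (ω * x))) + z 1 * Real.cos (ω * x)
  have cu : Continuous u := by simp only [u]; fun_prop
  have cv : Continuous v := by simp only [v]; fun_prop
  have hlin : ∀ x, HasDerivAt (fun x : ℝ => ω * x) ω x := fun x => by
    simpa using (hasDerivAt_id x).const_mul ω
  have du : ∀ x, HasDerivAt u (v x) x := by
    intro x
    convert! ((hlin x).cos.const_mul (z 0)).add (((hlin x).sin.div_const ω).const_mul (z 1)) using 1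
    simp only [v]; field_simp
  have dv : ∀ x, HasDerivAt v (-ω ^ 2 * u x - (0 : ℝ → ℝ) x) x := by
    intro x
    convert! (((hlin x).sin.const_mul ω).neg.const_mul (z 0)).add ((hlin x).cos.const_mul (z 1)) using 1
    simp only [u, Pi.zero_apply]; field_simp; ring
  refine ⟨u, v, ⟨cu, cv, ?_, ?_⟩, ?_, ?_⟩
  · intro x _
    rw [intervalIntegral.integral_eq_sub_of_hasDerivAt (fun y _ => du y) (cv.intervalIntegrable _ _)]
    ring
  · intro x _
    rw [intervalIntegral.integral_eq_sub_of_hasDerivAt (fun y _ => dv y)]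
    · ring
    · apply Continuous.intervalIntegrable
      simp only [Pi.zero_apply]; fun_prop
  · ext i; fin_cases i <;> simp [u, v]
  · ext i; fin_cases i <;> simp [u, v, Matrix.mulVec, dotProduct, Fin.sum_univ_two] <;> ring

/-- On an interval over which `1 + |q|` has integral at most `1/2`, the Picard iteration is a
contraction of `C([s,t], ℝ²)`. -/
lemma exists_sol_small {q : ℝ → ℝ} {s t : ℝ} (hst : s ≤ t)
    (hq : ∀ s t, IntervalIntegrable q volume s t)
    (hsmall : ∫ r in s..t, (1 + |q r|) ≤ 1 / 2) (z₀ z₁ : ℝ) :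
    ∃ u v : ℝ → ℝ, IsSol q 0 s t u v ∧ u s = z₀ ∧ v s = z₁ := by
  have cext : ∀ f : C(Icc s t, ℝ × ℝ), Continuous (IccExtend hst f) :=
    fun f => f.continuous.Icc_extend'
  have iq : ∀ f : C(Icc s t, ℝ × ℝ), ∀ a b, IntervalIntegrable
      (fun r => q r * (IccExtend hst f r).1) volume a b := fun f a b =>
    (hq a b).mul_continuousOn (cext f).fst.continuousOn
  let Φ : C(Icc s t, ℝ × ℝ) → C(Icc s t, ℝ × ℝ) := fun f =>
    ⟨fun x => (z₀ + ∫ r in s..x, (IccExtend hst f r).2,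
        z₁ + ∫ r in s..x, q r * (IccExtend hst f r).1), by
      apply Continuous.prodMk
      · exact continuous_const.add ((intervalIntegral.continuous_primitive
          (fun a b => (cext f).snd.intervalIntegrable a b) s).comp continuous_subtype_val)
      · exact continuous_const.add ((intervalIntegral.continuous_primitive
          (iq f) s).comp continuous_subtype_val)⟩
  have hΦ : ContractingWith (1 / 2 : NNReal) Φ := by
    refine ⟨by rw [← NNReal.coe_lt_coe]; norm_num, LipschitzWith.of_dist_le_mul fun f g => ?_⟩
    rw [ContinuousMap.dist_le (by positivity)]
    intro x
    have hfg : ∀ r, ‖IccExtend hst f r - IccExtend hst g r‖ ≤ dist f g := by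
      intro r
      rw [← dist_eq_norm]
      exact ContinuousMap.dist_apply_le_dist _
    have i1 : ∀ a b, IntervalIntegrable (fun r => 1 + |q r|) volume a b := fun a b =>
      (continuous_const.intervalIntegrable a b).add (hq a b).abs
    have mono : ∫ r in s..x, (1 + |q r|) * dist f g ≤ 1 / 2 * dist f g := by
      rw [intervalIntegral.integral_mul_const]
      gcongr
      refine le_trans ?_ hsmall
      apply intervalIntegral.integral_mono_interval le_rfl x.2.1 x.2.2 _ (i1 _ _)
      filter_upwards with r
      simp only [Pi.zero_apply]
      positivity
    have hxs : s ≤ (x : ℝ) := x.2.1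
    rw [dist_eq_norm, Prod.norm_def]
    simp only [NNReal.coe_div, NNReal.coe_one, NNReal.coe_ofNat]
    refine le_trans (max_le ?_ ?_) mono
    · simp only [Φ, ContinuousMap.coe_mk, Prod.fst_sub, add_sub_add_left_eq_sub]
      rw [← intervalIntegral.integral_sub ((cext f).snd.intervalIntegrable _ _)
        ((cext g).snd.intervalIntegrable _ _)]
      apply intervalIntegral.norm_integral_le_of_norm_le hxs _ ((i1 _ _).mul_const _)
      filter_upwards with r _
      have h1 := (norm_snd_le (IccExtend hst f r - IccExtend hst g r)).trans (hfg r)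
      rw [Prod.snd_sub] at h1
      nlinarith [abs_nonneg (q r), dist_nonneg (x := f) (y := g)]
    · simp only [Φ, ContinuousMap.coe_mk, Prod.snd_sub, add_sub_add_left_eq_sub]
      rw [← intervalIntegral.integral_sub (iq f _ _) (iq g _ _)]
      apply intervalIntegral.norm_integral_le_of_norm_le hxs _ ((i1 _ _).mul_const _)
      filter_upwards with r _
      have h1 := (norm_fst_le (IccExtend hst f r - IccExtend hst g r)).trans (hfg r)
      rw [Prod.fst_sub] at h1
      rw [← mul_sub, norm_mul, Real.norm_eq_abs]
      nlinarith [abs_nonneg (q r), dist_nonneg (x := f) (y := g)]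
  have : Nonempty (Icc s t) := ⟨⟨s, le_rfl, hst⟩⟩
  obtain ⟨f, hf⟩ : ∃ f, Φ f = f := ⟨_, hΦ.fixedPoint_isFixedPt⟩
  have ev : ∀ x (hx : x ∈ Icc s t), IccExtend hst f x =
      (z₀ + ∫ r in s..x, (IccExtend hst f r).2, z₁ + ∫ r in s..x, q r * (IccExtend hst f r).1) := by
    intro x hx
    conv_lhs => rw [IccExtend_of_mem hst f hx, ← hf]
    rfl
  have e0 := ev s ⟨le_rfl, hst⟩
  simp only [intervalIntegral.integral_same, add_zero] at e0
  refine ⟨fun x => (IccExtend hst f x).1, fun x => (IccExtend hst f x).2,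
    ⟨(cext f).fst, (cext f).snd, ?_, ?_⟩, congrArg Prod.fst e0, congrArg Prod.snd e0⟩
  · intro x hx
    simp only [e0]
    conv_lhs => rw [ev x hx]
  · intro x hx
    simp only [e0, Pi.zero_apply, sub_zero]
    conv_lhs => rw [ev x hx]

lemma transfer_small {q : ℝ → ℝ} {s t : ℝ} (hst : s ≤ t)
    (hq : ∀ s t, IntervalIntegrable q volume s t)
    (hsmall : ∫ r in s..t, (1 + |q r|) ≤ 1 / 2) : ∃ P, Transfer q s t P := by
  obtain ⟨u, v, h, hu, hv⟩ := exists_sol_small hst hq hsmall 1 0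
  obtain ⟨u', v', h', hu', hv'⟩ := exists_sol_small hst hq hsmall 0 1
  refine ⟨!![u t, u' t; v t, v' t], fun z => ⟨_, _, h.lin hq h' (z 0) (z 1), ?_, ?_⟩⟩
  · ext i; fin_cases i <;> simp [hu, hv, hu', hv']
  · ext i; fin_cases i <;> simp [Matrix.mulVec, dotProduct, Fin.sum_univ_two] <;> ring

/-- Transfer matrices exist over every interval: cut it into pieces over which `1 + |q|` has
integral at most `1/2`. -/
theorem exists_transfer {q : ℝ → ℝ} (hq : ∀ s t, IntervalIntegrable q volume s t)
    {s t : ℝ} (hst : s ≤ t) : ∃ P, Transfer q s t P := by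
  have i1 : ∀ a b, IntervalIntegrable (fun r => 1 + |q r|) volume a b := fun a b =>
    (continuous_const.intervalIntegrable a b).add (hq a b).abs
  have key : ∀ N : ℕ, ∀ s t : ℝ, s ≤ t → ∫ r in s..t, (1 + |q r|) ≤ N / 2 →
      ∃ P, Transfer q s t P := by
    intro N
    induction N with
    | zero =>
      intro s t hst h
      exact transfer_small hst hq (h.trans (by norm_num))
    | succ N ih =>
      intro s t hst h
      by_cases hN : ∫ r in s..t, (1 + |q r|) ≤ N / 2
      · exact ih s t hst hN
      · have hc : ContinuousOn (fun x => ∫ r in s..x, (1 + |q r|)) (Icc s t) :=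
          (intervalIntegral.continuous_primitive i1 s).continuousOn
        obtain ⟨c, hc, hce⟩ := intermediate_value_Icc hst hc
          (show (N / 2 : ℝ) ∈ Icc _ _ from
            ⟨by simp only [intervalIntegral.integral_same]; positivity, (not_le.1 hN).le⟩)
        obtain ⟨P, hP⟩ := ih s c hc.1 hce.le
        have hadd := intervalIntegral.integral_add_adjacent_intervals (i1 s c) (i1 c t)
        obtain ⟨Q, hQ⟩ := transfer_small hc.2 hq (by
          push_cast at h
          simp only at hce
          linarith)
        exact ⟨_, hP.comp hc.1 hc.2 hq hQ⟩
  obtain ⟨N, hN⟩ := exists_nat_ge (2 * ∫ r in s..t, (1 + |q r|))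
  exact key N s t hst (by linarith)

/-! ### Regularity of weak solutions -/

/-- Test functions: smooth with compact support. -/
def IsTest (φ : ℝ → ℝ) : Prop := ContDiff ℝ (⊤ : ℕ∞) φ ∧ HasCompactSupport φ

lemma IsTest.deriv {φ : ℝ → ℝ} (h : IsTest φ) : IsTest (deriv φ) :=
  ⟨(contDiff_infty_iff_deriv.1 h.1).2, h.2.deriv⟩

lemma IsTest.sub {φ θ : ℝ → ℝ} (h : IsTest φ) (h' : IsTest θ) : IsTest (fun x => φ x - θ x) :=
  ⟨h.1.sub h'.1, h.2.sub h'.2⟩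

lemma IsTest.const_mul {φ : ℝ → ℝ} (h : IsTest φ) (c : ℝ) : IsTest (fun x => c * φ x) :=
  ⟨contDiff_const.mul h.1, h.2.mul_left⟩

lemma IsTest.continuous {φ : ℝ → ℝ} (h : IsTest φ) : Continuous φ := h.1.continuous

lemma IsTest.integrable_mul {φ f : ℝ → ℝ} (h : IsTest φ) (hf : LocallyIntegrable f volume) :
    Integrable (fun x => f x * φ x) := by
  simpa [mul_comm] using hf.integrable_smul_left_of_hasCompactSupport h.continuous h.2

lemma IsTest.integrable {φ : ℝ → ℝ} (h : IsTest φ) : Integrable φ :=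
  h.continuous.integrable_of_hasCompactSupport h.2

lemma IsTest.exists_bound {φ : ℝ → ℝ} (h : IsTest φ) :
    ∃ R : ℝ, 0 < R ∧ Function.support φ ⊆ Ioo (-R) R := by
  obtain ⟨R, hR⟩ := h.2.isCompact.isBounded.subset_ball 0
  refine ⟨max R 1, by positivity, (subset_tsupport φ).trans (hR.trans ?_)⟩
  rw [Real.ball_eq_Ioo]
  apply Ioo_subset_Ioo <;> simp

/-- The test functions of integral `0` are the derivatives of test functions. -/
lemma exists_antideriv {θ : ℝ → ℝ} (h : IsTest θ) (h0 : ∫ x, θ x = 0) :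
    ∃ Φ, IsTest Φ ∧ deriv Φ = θ := by
  obtain ⟨R, hR0, hR⟩ := h.exists_bound
  let Φ : ℝ → ℝ := fun x => ∫ t in (-R)..x, θ t
  have hd : ∀ x, HasDerivAt Φ (θ x) x := fun x => h.continuous.integral_hasStrictDerivAt _ _ |>.hasDerivAt
  have hdΦ : deriv Φ = θ := funext fun x => (hd x).deriv
  refine ⟨Φ, ⟨contDiff_infty_iff_deriv.2 ⟨fun x => (hd x).differentiableAt, by rw [hdΦ]; exact h.1⟩, ?_⟩, hdΦ⟩
  apply HasCompactSupport.of_support_subset_isCompact (isCompact_Icc (a := -R) (b := R))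
  intro x hx
  by_contra hxR
  apply hx
  by_cases h1 : x < -R
  · simp only [Φ]
    rw [intervalIntegral.integral_symm, neg_eq_zero]
    apply intervalIntegral.integral_zero_ae
    filter_upwards with y hy
    rw [uIoc_of_le h1.le] at hy
    by_contra hne
    exact absurd (hR hne).1 (not_lt.2 hy.2)
  · have h2 : R < x := by
      by_contra h2
      exact hxR ⟨not_lt.1 h1, not_lt.1 h2⟩
    simp only [Φ]
    rw [intervalIntegral.integral_eq_integral_of_support_subset, h0]
    exact fun y hy => ⟨(hR hy).1, ((hR hy).2.trans h2).le⟩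

lemma exists_unit_test : ∃ η, IsTest η ∧ ∫ x, η x = 1 := by
  let b : ContDiffBump (0 : ℝ) := default
  exact ⟨b.normed volume, ⟨b.contDiff_normed, b.hasCompactSupport_normed⟩, b.integral_normed⟩

/-- A locally integrable function with zero distributional derivative is almost everywhere
constant. -/
lemma du_bois_reymond {f : ℝ → ℝ} (hf : LocallyIntegrable f volume)
    (h : ∀ φ, IsTest φ → ∫ x, f x * deriv φ x = 0) : ∃ c, ∀ᵐ x, f x = c := by
  obtain ⟨η, hη, hη1⟩ := exists_unit_test
  refine ⟨∫ x, f x * η x, ?_⟩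
  apply ae_eq_of_integral_contDiff_smul_eq hf (continuous_const.locallyIntegrable)
  intro θ hθ1 hθ2
  have hθ : IsTest θ := ⟨hθ1, hθ2⟩
  have ht := hθ.sub (hη.const_mul (∫ x, θ x))
  obtain ⟨Φ, hΦ, hd⟩ := exists_antideriv ht (by
    rw [integral_sub hθ.integrable (hη.const_mul _).integrable, integral_const_mul, hη1]; ring)
  have := h Φ hΦ
  rw [hd] at this
  simp only [smul_eq_mul]
  rw [integral_mul_const]
  have e : ∫ x, f x * (θ x - (∫ x, θ x) * η x) = (∫ x, f x * θ x) - (∫ x, θ x) * ∫ x, f x * η x := by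
    rw [← integral_const_mul, ← integral_sub (hθ.integrable_mul hf)
      ((hη.integrable_mul hf).const_mul _)]
    congr 1; ext x; ring
  rw [e] at this
  rw [← sub_eq_zero.1 this]
  congr 1; ext x; ring

/-- Integration by parts of a primitive against a test function. -/
lemma ibp_test {F r φ : ℝ → ℝ} (hr : ∀ a b, IntervalIntegrable r volume a b)
    (hF : ∀ s x, F x = F s + ∫ t in s..x, r t) (hφ : IsTest φ) :
    ∫ x, F x * deriv φ x = - ∫ x, r x * φ x := by
  obtain ⟨R, hR0, hR⟩ := hφ.exists_bound
  have hφR : φ R = 0 := by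
    by_contra hne; exact lt_irrefl _ (hR hne).2
  have hφR' : φ (-R) = 0 := by
    by_contra hne; exact lt_irrefl _ (hR hne).1
  have hcd : Continuous (deriv φ) := hφ.deriv.continuous
  have hcF : Continuous F := by
    have : F = fun x => F 0 + ∫ t in (0:ℝ)..x, r t := funext fun x => hF 0 x
    rw [this]
    exact continuous_const.add (intervalIntegral.continuous_primitive hr 0)
  have p := prod_integral (F := F) (f := r) (K := φ) (k := deriv φ) (s := -R) (x := R) (by linarith) (hr _ _)
    (hcd.intervalIntegrable _ _) (fun y _ => hF _ y) (fun y _ => by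
      rw [intervalIntegral.integral_deriv_eq_sub (fun x _ => hφ.1.differentiable (by simp) x)
        (hcd.intervalIntegrable _ _)]; ring)
  have hFd : Continuous (fun x => F x * deriv φ x) := hcF.mul hcd
  rw [hφR, hφR', intervalIntegral.integral_add ((hr _ _).mul_continuousOn hφ.continuous.continuousOn)
    (hFd.intervalIntegrable _ _)] at p
  rw [intervalIntegral.integral_eq_integral_of_support_subset,
    intervalIntegral.integral_eq_integral_of_support_subset] at p
  · linarith
  · intro x hx
    have h1 : x ∈ tsupport φ := support_deriv_subset (Function.support_mul_subset_right _ _ hx)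
    have h2 : x ∈ closure (Ioo (-R) R) := closure_mono hR h1
    rw [closure_Ioo (by linarith)] at h2
    refine ⟨lt_of_le_of_ne h2.1 ?_, h2.2⟩
    rintro rfl
    -- the derivative vanishes at an end point of the support
    apply hx
    have hmin : deriv φ (-R) = 0 := by
      have hz : ∀ y ∈ Iic (-R), φ y = 0 := by
        intro y hy
        by_contra hne; exact absurd (hR hne).1 (not_lt.2 hy)
      have hdw : HasDerivWithinAt φ (deriv φ (-R)) (Iic (-R)) (-R) :=
        (hφ.1.differentiable (by simp) (-R)).hasDerivAt.hasDerivWithinAt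
      have hdz : HasDerivWithinAt φ 0 (Iic (-R)) (-R) :=
        (hasDerivWithinAt_const (-R) (Iic (-R)) (0:ℝ)).congr hz (hz _ (by simp))
      exact (uniqueDiffWithinAt_Iic (-R)).eq_deriv _ hdw hdz
    simp [hmin]
  · exact fun x hx => Ioo_subset_Ioc_self (hR (Function.support_mul_subset_right _ _ hx))

/-- A locally integrable function with zero second distributional derivative is almost everywhere
affine. -/
lemma du_bois_reymond₂ {f : ℝ → ℝ} (hf : LocallyIntegrable f volume)
    (h : ∀ φ, IsTest φ → ∫ x, f x * deriv (deriv φ) x = 0) : ∃ c d, ∀ᵐ x, f x = c + d * x := by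
  obtain ⟨η, hη, hη1⟩ := exists_unit_test
  set e := ∫ x, f x * deriv η x with he
  have hlin : LocallyIntegrable (fun x : ℝ => e * x) volume :=
    (by fun_prop : Continuous (fun x : ℝ => e * x)).locallyIntegrable
  obtain ⟨c, hc⟩ := du_bois_reymond (hf.add hlin) (by
    intro θ hθ
    have ht := hθ.sub (hη.const_mul (∫ x, θ x))
    obtain ⟨Φ, hΦ, hd⟩ := exists_antideriv ht (by
      rw [integral_sub hθ.integrable (hη.const_mul _).integrable, integral_const_mul, hη1]; ring)
    have h1 := h Φ hΦ
    have hdd : deriv (deriv Φ) = fun x => deriv θ x - (∫ x, θ x) * deriv η x := by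
      ext x
      rw [hd]
      rw [deriv_fun_sub (hθ.1.differentiable (by simp) x)
        ((hη.const_mul _).1.differentiable (by simp) x),
        deriv_const_mul _ (hη.1.differentiable (by simp) x)]
    rw [hdd] at h1
    have e1 : ∫ x, f x * (deriv θ x - (∫ x, θ x) * deriv η x)
        = (∫ x, f x * deriv θ x) - (∫ x, θ x) * e := by
      rw [he, ← integral_const_mul, ← integral_sub (hθ.deriv.integrable_mul hf)
        ((hη.deriv.integrable_mul hf).const_mul _)]
      congr 1; ext x; ring
    have e2 : ∫ x, (e * x) * deriv θ x = - ∫ x, e * θ x := by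
      apply ibp_test (r := fun _ => e) (fun a b => continuous_const.intervalIntegrable a b) _ hθ
      intro s x; simp; ring
    rw [integral_const_mul] at e2
    have e3 : ∫ x, (f x + e * x) * deriv θ x = (∫ x, f x * deriv θ x) + ∫ x, (e * x) * deriv θ x := by
      rw [← integral_add (hθ.deriv.integrable_mul hf) (hθ.deriv.integrable_mul hlin)]
      congr 1; ext x; ring
    simp only [Pi.add_apply]
    rw [e3, e2]
    linarith)
  refine ⟨c, -e, ?_⟩
  filter_upwards [hc] with x hx
  simp only [Pi.add_apply] at hx
  linarith

/-- Weak solutions of `-g'' + q g = h` agree almost everywhere with Carathéodory solutions: `g`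
differs from the second primitive of `q g - h` by an affine function. -/
theorem weak_regular {q g h : ℝ → ℝ} (hg : LocallyIntegrable g volume)
    (hh : LocallyIntegrable h volume) (hqg : LocallyIntegrable (fun x => q x * g x) volume)
    (hw : ∀ φ, IsTest φ → ∫ x, g x * (-(deriv (deriv φ) x) + q x * φ x) = ∫ x, h x * φ x) :
    ∃ G G1 : ℝ → ℝ, (∀ᵐ x, g x = G x) ∧ ∀ s t, IsSol q h s t G G1 := by
  let r : ℝ → ℝ := fun x => q x * g x - h x
  have hr : LocallyIntegrable r volume := hqg.sub hh
  have hri : ∀ a b, IntervalIntegrable r volume a b := fun a b =>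
    (hr.integrableOn_isCompact isCompact_uIcc).intervalIntegrable
  let F : ℝ → ℝ := fun x => ∫ t in (0:ℝ)..x, r t
  have cF : Continuous F := intervalIntegral.continuous_primitive hri 0
  have hFi : ∀ a b, IntervalIntegrable F volume a b := fun a b => cF.intervalIntegrable a b
  let K : ℝ → ℝ := fun x => ∫ t in (0:ℝ)..x, F t
  have cK : Continuous K := intervalIntegral.continuous_primitive hFi 0
  have eF : ∀ s x, F x = F s + ∫ t in s..x, r t := fun s x =>
    (intervalIntegral.integral_add_adjacent_intervals (hri _ _) (hri _ _)).symm
  have eK : ∀ s x, K x = K s + ∫ t in s..x, F t := fun s x =>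
    (intervalIntegral.integral_add_adjacent_intervals (hFi _ _) (hFi _ _)).symm
  obtain ⟨c, d, hcd⟩ := du_bois_reymond₂ (hg.sub cK.locallyIntegrable) (by
    intro φ hφ
    have h1 := ibp_test hri eF hφ
    have h2 := ibp_test hFi eK hφ.deriv
    have h3 := hw φ hφ
    have e1 : ∫ x, g x * (-(deriv (deriv φ) x) + q x * φ x)
        = (∫ x, q x * g x * φ x) - ∫ x, g x * deriv (deriv φ) x := by
      rw [← integral_sub (hφ.integrable_mul hqg) (hφ.deriv.deriv.integrable_mul hg)]
      congr 1; ext x; ring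
    have e2 : ∫ x, r x * φ x = (∫ x, q x * g x * φ x) - ∫ x, h x * φ x := by
      rw [← integral_sub (hφ.integrable_mul hqg) (hφ.integrable_mul hh)]
      congr 1; ext x; simp only [r]; ring
    have e3 : ∫ x, (g - K) x * deriv (deriv φ) x = (∫ x, g x * deriv (deriv φ) x)
        - ∫ x, K x * deriv (deriv φ) x := by
      rw [← integral_sub (hφ.deriv.deriv.integrable_mul hg)
        (hφ.deriv.deriv.integrable_mul cK.locallyIntegrable)]
      congr 1; ext x; simp only [Pi.sub_apply]; ring
    rw [e3]
    linarith)
  have hgG : ∀ᵐ x, g x = c + d * x + K x := by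
    filter_upwards [hcd] with x hx
    simp only [Pi.sub_apply] at hx
    linarith
  refine ⟨fun x => c + d * x + K x, fun x => d + F x, hgG, fun s t => ⟨by fun_prop, by fun_prop, ?_, ?_⟩⟩
  · intro x _
    rw [intervalIntegral.integral_add (by simp) (hFi _ _), eK s x]
    simp; ring
  · intro x _
    rw [eF s x, add_assoc]
    congr 2
    apply intervalIntegral.integral_congr_ae
    filter_upwards [hgG] with y hy _
    simp only [r]; rw [hy]

/-! ### A priori estimate for hyperbolic monodromy -/

lemma sq_integral_abs_le {h : ℝ → ℝ} {L : ℝ} (hL : 0 < L)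
    (hh : IntervalIntegrable h volume 0 L)
    (hh2 : IntervalIntegrable (fun x => h x ^ 2) volume 0 L) :
    (∫ x in (0:ℝ)..L, |h x|) ^ 2 ≤ L * ∫ x in (0:ℝ)..L, h x ^ 2 := by
  set β := ∫ x in (0:ℝ)..L, |h x| with hβ
  have h0 : 0 ≤ ∫ x in (0:ℝ)..L, (|h x| - β / L) ^ 2 :=
    intervalIntegral.integral_nonneg hL.le (fun x _ => sq_nonneg _)
  have e : ∫ x in (0:ℝ)..L, (|h x| - β / L) ^ 2
      = (∫ x in (0:ℝ)..L, h x ^ 2) - 2 * (β / L) * β + (β / L) ^ 2 * L := by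
    have : ∀ x, (|h x| - β / L) ^ 2 = h x ^ 2 - 2 * (β / L) * |h x| + (β / L) ^ 2 := by
      intro x; rw [← sq_abs (h x)]; ring
    simp_rw [this]
    rw [intervalIntegral.integral_add (hh2.sub (hh.abs.const_mul _)) (by simp),
      intervalIntegral.integral_sub hh2 (hh.abs.const_mul _),
      intervalIntegral.integral_const_mul, intervalIntegral.integral_const]
    simp; ring
  rw [e] at h0
  have e2 : L * ((∫ x in (0:ℝ)..L, h x ^ 2) - 2 * (β / L) * β + (β / L) ^ 2 * L)
      = L * (∫ x in (0:ℝ)..L, h x ^ 2) - β ^ 2 := by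
    field_simp; ring
  have := mul_nonneg hL.le h0
  linarith

/-- On one cell, the Wronskian of a solution of the inhomogeneous equation with a homogeneous
solution varies by at most a multiple of the `L¹` norm of the right-hand side. -/
lemma cell_wronskian_le {q h u v g g1 : ℝ → ℝ} {L M : ℝ}
    (hq : ∀ s t, IntervalIntegrable q volume s t) (hh : ∀ s t, IntervalIntegrable h volume s t)
    (hu : IsSol q 0 0 L u v) (hg : IsSol q h 0 L g g1)
    (hM : ∀ x ∈ Icc 0 L, |u x| ≤ M) {x : ℝ} (hx : x ∈ Icc 0 L) :
    |g x * v x - g1 x * u x - (g 0 * v 0 - g1 0 * u 0)| ≤ M * ∫ r in (0:ℝ)..L, |h r| := by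
  rw [wronskian hq hh hu hg hx, add_sub_cancel_left]
  have hM0 : 0 ≤ M := (abs_nonneg _).trans (hM x hx)
  calc |∫ r in (0:ℝ)..x, h r * u r| ≤ ∫ r in (0:ℝ)..x, |h r * u r| :=
        intervalIntegral.abs_integral_le_integral_abs hx.1
    _ ≤ ∫ r in (0:ℝ)..x, M * |h r| := by
        apply intervalIntegral.integral_mono_on hx.1
        · exact ((hh _ _).mul_continuousOn hu.cu.continuousOn).abs
        · exact (hh _ _).abs.const_mul _
        · intro r hr
          rw [abs_mul, mul_comm]
          exact mul_le_mul_of_nonneg_right (hM r ⟨hr.1, hr.2.trans hx.2⟩) (abs_nonneg _)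
    _ = M * ∫ r in (0:ℝ)..x, |h r| := by rw [intervalIntegral.integral_const_mul]
    _ ≤ _ := by
        apply mul_le_mul_of_nonneg_left _ hM0
        apply intervalIntegral.integral_mono_interval le_rfl hx.1 hx.2
        · filter_upwards with r using abs_nonneg _
        · exact (hh _ _).abs

/-- The Wronskian at the left end of a cell is controlled by the `L¹` norms of `g` and `h` there;
no derivative of `g` enters, since integrating against the weight `x (L - x)`, which vanishes at
both ends, moves the derivative away from `g`. -/
lemma cell_wronskian_start_le {q h u v g g1 : ℝ → ℝ} {L M : ℝ} (hL : 0 < L)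
    (hq : ∀ s t, IntervalIntegrable q volume s t) (hh : ∀ s t, IntervalIntegrable h volume s t)
    (hu : IsSol q 0 0 L u v) (hg : IsSol q h 0 L g g1)
    (hM : ∀ x ∈ Icc 0 L, |u x| ≤ M) (hM' : ∀ x ∈ Icc 0 L, |v x| ≤ M) :
    |g 0 * v 0 - g1 0 * u 0| * (L ^ 3 / 6) ≤
      (2 * L ^ 2 + L) * M * (∫ r in (0:ℝ)..L, |g r|)
        + L ^ 3 / 6 * (M * ∫ r in (0:ℝ)..L, |h r|) := by
  have cg := hg.cu
  have cg1 := hg.cv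
  have cu := hu.cu
  have cv := hu.cv
  have hM0 : 0 ≤ M := (abs_nonneg _).trans (hM 0 ⟨le_rfl, hL.le⟩)
  set z := g 0 * v 0 - g1 0 * u 0 with hz
  set B := M * ∫ r in (0:ℝ)..L, |h r| with hB
  let ρ : ℝ → ℝ := fun x => x * (L - x)
  let ρ' : ℝ → ℝ := fun x => L - 2 * x
  have cρ : Continuous ρ := by fun_prop
  have cρ' : Continuous ρ' := by fun_prop
  have eρ : ∀ y ∈ Icc 0 L, ρ y = ρ 0 + ∫ r in (0:ℝ)..y, ρ' r := by
    intro y _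
    rw [intervalIntegral.integral_eq_sub_of_hasDerivAt (f := ρ) (f' := ρ')]
    · ring
    · intro x _
      have := (hasDerivAt_id x).mul ((hasDerivAt_id x).const_sub L)
      refine this.congr_deriv ?_
      simp [ρ']; ring
    · exact cρ'.intervalIntegrable _ _
  have eug : ∀ y ∈ Icc 0 L, (fun x => u x * g x) y = (fun x => u x * g x) 0
      + ∫ r in (0:ℝ)..y, (v r * g r + u r * g1 r) := by
    intro y hy
    exact prod_integral hy.1 (cv.intervalIntegrable _ _) (cg1.intervalIntegrable _ _)
      (fun w hw => hu.eu w ⟨hw.1, hw.2.trans hy.2⟩) (fun w hw => hg.eu w ⟨hw.1, hw.2.trans hy.2⟩)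
  have p := prod_integral hL.le (cρ'.intervalIntegrable _ _)
    ((by fun_prop : Continuous (fun r => v r * g r + u r * g1 r)).intervalIntegrable _ _) eρ eug
  have i0 : ∫ x in (0:ℝ)..L, ρ x = L ^ 3 / 6 := by
    rw [intervalIntegral.integral_eq_sub_of_hasDerivAt (f := fun x => L * x ^ 2 / 2 - x ^ 3 / 3)
      (f' := ρ)]
    · ring
    · intro x _
      have := (((hasDerivAt_pow 2 x).const_mul L).div_const 2).sub
        ((hasDerivAt_pow 3 x).div_const 3)
      refine this.congr_deriv ?_
      simp [ρ]; ring
    · exact cρ.intervalIntegrable _ _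
  have key : z * (L ^ 3 / 6) = (∫ r in (0:ℝ)..L, (2 * ρ r * v r + ρ' r * u r) * g r)
      - ∫ r in (0:ℝ)..L, ρ r * (g r * v r - g1 r * u r - z) := by
    rw [← i0, ← intervalIntegral.integral_const_mul]
    have p' : ∫ r in (0:ℝ)..L, (ρ' r * (u r * g r) + ρ r * (v r * g r + u r * g1 r)) = 0 := by
      simpa [ρ] using p.symm
    rw [← add_zero (∫ r in (0:ℝ)..L, z * ρ r)]
    nth_rewrite 2 [← p']
    rw [← intervalIntegral.integral_add, ← intervalIntegral.integral_sub]
    · congr 1; ext r; ring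
    all_goals exact Continuous.intervalIntegrable (by fun_prop) _ _
  have b1 : |∫ r in (0:ℝ)..L, (2 * ρ r * v r + ρ' r * u r) * g r| ≤
      (2 * L ^ 2 + L) * M * (∫ r in (0:ℝ)..L, |g r|) := by
    refine (intervalIntegral.abs_integral_le_integral_abs hL.le).trans ?_
    rw [← intervalIntegral.integral_const_mul]
    apply intervalIntegral.integral_mono_on hL.le
    · exact Continuous.intervalIntegrable (by fun_prop) _ _
    · exact Continuous.intervalIntegrable (by fun_prop) _ _
    intro x hx
    rw [abs_mul]
    apply mul_le_mul_of_nonneg_right _ (abs_nonneg _)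
    have r1 : |ρ x| ≤ L ^ 2 := by
      simp only [ρ]; rw [abs_mul, abs_of_nonneg hx.1, abs_of_nonneg (sub_nonneg.2 hx.2)]
      nlinarith [hx.1, hx.2]
    have r2 : |ρ' x| ≤ L := by
      simp only [ρ']; rw [abs_le]; constructor <;> linarith [hx.1, hx.2]
    calc |2 * ρ x * v x + ρ' x * u x| ≤ |2 * ρ x * v x| + |ρ' x * u x| := abs_add_le _ _
      _ = 2 * (|ρ x| * |v x|) + |ρ' x| * |u x| := by simp only [abs_mul, abs_two]; ring
      _ ≤ 2 * (L ^ 2 * M) + L * M := by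
        gcongr
        · exact hM' x hx
        · exact hM x hx
      _ = _ := by ring
  have b2 : |∫ r in (0:ℝ)..L, ρ r * (g r * v r - g1 r * u r - z)| ≤ L ^ 3 / 6 * B := by
    refine (intervalIntegral.abs_integral_le_integral_abs hL.le).trans ?_
    rw [← i0, ← intervalIntegral.integral_mul_const]
    apply intervalIntegral.integral_mono_on hL.le
    · exact Continuous.intervalIntegrable (by fun_prop) _ _
    · exact Continuous.intervalIntegrable (by fun_prop) _ _
    intro x hx
    have : 0 ≤ ρ x := mul_nonneg hx.1 (sub_nonneg.2 hx.2)
    rw [abs_mul, abs_of_nonneg this]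
    exact mul_le_mul_of_nonneg_left (cell_wronskian_le hq hh hu hg hM hx) this
  have : |z| * (L ^ 3 / 6) = |z * (L ^ 3 / 6)| := by
    rw [abs_mul, abs_of_pos (by positivity : 0 < L ^ 3 / 6)]
  rw [this, key]
  exact (abs_sub _ _).trans (add_le_add b1 b2)

/-- A solution of the inhomogeneous equation on one cell is recovered from its Wronskians with two
independent homogeneous solutions. -/
lemma cell_bound {q h u v u' v' g g1 : ℝ → ℝ} {L M : ℝ}
    (hq : ∀ s t, IntervalIntegrable q volume s t) (hh : ∀ s t, IntervalIntegrable h volume s t)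
    (hu : IsSol q 0 0 L u v) (hu' : IsSol q 0 0 L u' v') (hg : IsSol q h 0 L g g1)
    (hM : ∀ x ∈ Icc 0 L, |u x| ≤ M) (hM' : ∀ x ∈ Icc 0 L, |u' x| ≤ M) {x : ℝ} (hx : x ∈ Icc 0 L) :
    |g x| * |u 0 * v' 0 - v 0 * u' 0| ≤
      M * (|g 0 * v 0 - g1 0 * u 0| + |g 0 * v' 0 - g1 0 * u' 0|
        + 2 * (M * ∫ r in (0:ℝ)..L, |h r|)) := by
  have w := wronskian (h := 0) hq ii_zero hu' hu hx
  simp only [Pi.zero_apply, zero_mul, intervalIntegral.integral_zero, add_zero] at w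
  have b := cell_wronskian_le hq hh hu hg hM hx
  have b' := cell_wronskian_le hq hh hu' hg hM' hx
  set B := M * ∫ r in (0:ℝ)..L, |h r|
  set z := g 0 * v 0 - g1 0 * u 0
  set z' := g 0 * v' 0 - g1 0 * u' 0
  set X := g x * v x - g1 x * u x
  set X' := g x * v' x - g1 x * u' x
  have hM0 : 0 ≤ M := (abs_nonneg _).trans (hM x hx)
  rw [← abs_mul, ← w]
  have e : g x * (u x * v' x - v x * u' x) = u x * X' - u' x * X := by simp only [X, X']; ring
  have hX : |X| ≤ |z| + B := by
    have := abs_add_le (X - z) z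
    simp only [sub_add_cancel] at this; linarith
  have hX' : |X'| ≤ |z'| + B := by
    have := abs_add_le (X' - z') z'
    simp only [sub_add_cancel] at this; linarith
  rw [e]
  calc |u x * X' - u' x * X| ≤ |u x * X'| + |u' x * X| := abs_sub _ _
    _ = |u x| * |X'| + |u' x| * |X| := by simp only [abs_mul]
    _ ≤ M * (|z'| + B) + M * (|z| + B) := by
      gcongr
      · exact hM x hx
      · exact hM' x hx
    _ = _ := by ring

/-- The `ℓ²` estimate for the first-order recursion `lam z (n+1) - z n = f n` off the unit
circle: the square of the right-hand side dominates `(1 - |lam|)²` times that of `z`. -/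
lemma l2_recursion {lam : ℝ} {z f : ℤ → ℝ} (hz : Summable fun n => z n ^ 2)
    (hf : Summable fun n => f n ^ 2) (hr : ∀ n, lam * z (n + 1) = z n + f n) :
    (1 - |lam|) ^ 2 * ∑' n, z n ^ 2 ≤ ∑' n, f n ^ 2 := by
  have hz1 : Summable fun n : ℤ => z (n + 1) ^ 2 :=
    (Equiv.addRight (1 : ℤ)).summable_iff (f := fun n => z n ^ 2) |>.2 hz
  have e1 : ∑' n : ℤ, z (n + 1) ^ 2 = ∑' n, z n ^ 2 :=
    (Equiv.addRight (1 : ℤ)).tsum_eq (fun n => z n ^ 2)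
  have e : (1 - |lam|) ^ 2 * ∑' n, z n ^ 2
      = ∑' n : ℤ, ((lam ^ 2 - |lam|) * z (n + 1) ^ 2 + (1 - |lam|) * z n ^ 2) := by
    rw [(hz1.mul_left _).tsum_add (hz.mul_left _), tsum_mul_left, tsum_mul_left, e1,
      ← sq_abs lam]
    ring
  rw [e]
  refine ((hz1.mul_left _).add (hz.mul_left _)).tsum_le_tsum ?_ hf
  intro n
  have : f n = lam * z (n + 1) - z n := by linarith [hr n]
  rw [this]
  rcases abs_cases lam with ⟨h1, h2⟩ | ⟨h1, h2⟩ <;> rw [h1]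
  · nlinarith [mul_nonneg h2 (sq_nonneg (z (n + 1) - z n))]
  · nlinarith [mul_nonneg (neg_nonneg.2 h2.le) (sq_nonneg (z (n + 1) + z n))]

lemma hasSum_cells {F : ℝ → ℝ} {L : ℝ} (hL : 0 < L) (hF : Integrable F) :
    HasSum (fun n : ℤ => ∫ x in (0:ℝ)..L, F (x + n * L)) (∫ x, F x) := by
  have h := ((hF.comp_mul_left' hL.ne').hasSum_intervalIntegral_comp_add_int).mul_left L
  have e : L * ∫ x, F (L * x) = ∫ x, F x := by
    rw [Measure.integral_comp_mul_left, abs_of_pos (inv_pos.2 hL), smul_eq_mul,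
      mul_inv_cancel_left₀ hL.ne']
  rw [e] at h
  have hfun : (fun n : ℤ => ∫ x in (0:ℝ)..L, F (x + n * L))
      = fun n : ℤ => L * ∫ x in (0:ℝ)..1, F (L * (x + n)) := by
    funext n
    have := intervalIntegral.integral_comp_mul_add (a := 0) (b := 1) F hL.ne' (n * L)
    have e2 : ∀ x, F (L * (x + n)) = F (L * x + n * L) := fun x => by ring_nf
    simp_rw [e2]
    rw [this, intervalIntegral.integral_comp_add_right]
    simp [mul_inv_cancel_left₀ hL.ne']
  rw [hfun]
  exact h

lemma exists_eigenvector {P : Matrix (Fin 2) (Fin 2) ℝ} (hd : P.det = 1) {lam : ℝ}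
    (h : lam ^ 2 - P.trace * lam + 1 = 0) : ∃ z : Fin 2 → ℝ, z ≠ 0 ∧ P.mulVec z = lam • z := by
  have : (P - lam • 1).det = 0 := by
    rw [Matrix.det_fin_two] at hd ⊢
    rw [Matrix.trace_fin_two] at h
    simp; linarith
  obtain ⟨z, hz, h0⟩ := Matrix.exists_mulVec_eq_zero_iff.2 this
  refine ⟨z, hz, ?_⟩
  rw [Matrix.sub_mulVec, sub_eq_zero] at h0
  simpa [Matrix.smul_mulVec] using h0

/-- A hyperbolic matrix has two independent real eigenvectors, with eigenvalues off the unit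
circle. -/
lemma hyperbolic_eigen {P : Matrix (Fin 2) (Fin 2) ℝ} (hd : P.det = 1) (ht : 2 < |P.trace|) :
    ∃ lam mu : ℝ, |lam| ≠ 1 ∧ |mu| ≠ 1 ∧ ∃ z w : Fin 2 → ℝ, P.mulVec z = lam • z ∧
      P.mulVec w = mu • w ∧ z 0 * w 1 - z 1 * w 0 ≠ 0 := by
  set t := P.trace
  have h4 : 0 < t ^ 2 - 4 := by
    rw [← sq_abs t]; nlinarith
  have hs := Real.sq_sqrt h4.le
  have hs0 := Real.sqrt_pos.2 h4
  set s := √(t ^ 2 - 4)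
  have n1 : ∀ x : ℝ, x ^ 2 - t * x + 1 = 0 → |x| ≠ 1 := by
    intro x hx h1
    have hx2 : x ^ 2 = 1 := by rw [← sq_abs, h1]; norm_num
    have : t ^ 2 = 4 := by
      have e : t * x = 2 := by linarith
      have : t ^ 2 * x ^ 2 = 4 := by rw [← mul_pow, e]; norm_num
      rwa [hx2, mul_one] at this
    linarith
  have r1 : ((t + s) / 2) ^ 2 - t * ((t + s) / 2) + 1 = 0 := by nlinarith
  have r2 : ((t - s) / 2) ^ 2 - t * ((t - s) / 2) + 1 = 0 := by nlinarith
  obtain ⟨z, hz, hz'⟩ := exists_eigenvector hd r1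
  obtain ⟨w, hw, hw'⟩ := exists_eigenvector hd r2
  refine ⟨_, _, n1 _ r1, n1 _ r2, z, w, hz', hw', fun h0 => ?_⟩
  set lam := (t + s) / 2
  set mu := (t - s) / 2
  have hne : lam ≠ mu := by simp only [lam, mu]; intro h; linarith
  -- parallel eigenvectors would have the same eigenvalue
  have par : ∃ c : ℝ, w = c • z := by
    by_cases h : z 0 = 0
    · have h1 : z 1 ≠ 0 := fun h1 => hz (by ext i; fin_cases i <;> simp [h, h1])
      have hw0 : w 0 = 0 := by simpa [h, h1] using h0
      refine ⟨w 1 / z 1, ?_⟩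
      ext i; fin_cases i <;> simp [h, hw0, h1]
    · refine ⟨w 0 / z 0, ?_⟩
      ext i; fin_cases i
      · simp [h]
      · simp; field_simp; linarith
  obtain ⟨c, rfl⟩ := par
  rw [Matrix.mulVec_smul, hz', smul_smul, smul_smul] at hw'
  have : (c * lam - mu * c) • z = 0 := by rw [sub_smul, hw', sub_self]
  rcases smul_eq_zero.1 this with h | h
  · have hc : c ≠ 0 := fun hc => hw (by simp [hc])
    apply hne
    have : c * (lam - mu) = 0 := by linarith
    rcases mul_eq_zero.1 this with h | h
    · exact absurd h hc
    · linarith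
  · exact hz h

lemma IsSol.comp_add {q h g g1 : ℝ → ℝ} {s t : ℝ} (c : ℝ) (hq : ∀ x, q (x + c) = q x)
    (hg : IsSol q h (s + c) (t + c) g g1) :
    IsSol q (fun x => h (x + c)) s t (fun x => g (x + c)) (fun x => g1 (x + c)) := by
  refine ⟨hg.cu.comp (continuous_add_const c), hg.cv.comp (continuous_add_const c), ?_, ?_⟩
  · intro x hx
    rw [intervalIntegral.integral_comp_add_right]
    exact hg.eu (x + c) ⟨by linarith [hx.1], by linarith [hx.2]⟩
  · intro x hx
    have := intervalIntegral.integral_comp_add_right (a := s) (b := x)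
      (fun y => q y * g y - h y) c
    simp only [hq] at this
    rw [this]
    exact hg.ev (x + c) ⟨by linarith [hx.1], by linarith [hx.2]⟩

/-- A priori estimate: for a periodic potential with hyperbolic monodromy, every square-integrable
solution of `-g'' + q g = h` satisfies `‖g‖² ≤ C ‖h‖²`. -/
theorem apriori {q : ℝ → ℝ} {L : ℝ} (hL : 0 < L) (hq : ∀ s t, IntervalIntegrable q volume s t)
    (hper : Function.Periodic q L) {P : Matrix (Fin 2) (Fin 2) ℝ} (hP : Transfer q 0 L P)
    (ht : 2 < |P.trace|) :
    ∃ C : ℝ, 0 ≤ C ∧ ∀ g g1 h : ℝ → ℝ, (∀ s t, IsSol q h s t g g1) →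
      (∀ s t, IntervalIntegrable h volume s t) →
      Integrable (fun x => g x ^ 2) → Integrable (fun x => h x ^ 2) →
      ∫ x, g x ^ 2 ≤ C * ∫ x, h x ^ 2 := by
  obtain ⟨lam, mu, hlam, hmu, z₁, z₂, he₁, he₂, hW⟩ := hyperbolic_eigen (hP.det hL.le hq) ht
  obtain ⟨u, v, hu, i1, i2⟩ := hP z₁
  obtain ⟨u', v', hu', i1', i2'⟩ := hP z₂
  have uL : u L = lam * u 0 := by
    have := congrFun i2 0; rw [he₁, ← i1] at this; simpa using this
  have vL : v L = lam * v 0 := by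
    have := congrFun i2 1; rw [he₁, ← i1] at this; simpa using this
  have uL' : u' L = mu * u' 0 := by
    have := congrFun i2' 0; rw [he₂, ← i1'] at this; simpa using this
  have vL' : v' L = mu * v' 0 := by
    have := congrFun i2' 1; rw [he₂, ← i1'] at this; simpa using this
  have hW0 : u 0 * v' 0 - v 0 * u' 0 ≠ 0 := by
    rw [← i1, ← i1'] at hW; simpa using hW
  obtain ⟨M, hM⟩ : ∃ M, ∀ x ∈ Icc 0 L, |u x| ≤ M ∧ |v x| ≤ M ∧ |u' x| ≤ M ∧ |v' x| ≤ M := by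
    obtain ⟨M, hM⟩ := (isCompact_Icc (a := (0:ℝ)) (b := L)).exists_bound_of_continuousOn
      (f := fun x => |u x| + |v x| + |u' x| + |v' x|)
      (((hu.cu.abs.add hu.cv.abs).add hu'.cu.abs).add hu'.cv.abs).continuousOn
    refine ⟨M, fun x hx => ?_⟩
    have := (le_abs_self _).trans (hM x hx)
    have a1 := abs_nonneg (u x)
    have a2 := abs_nonneg (v x)
    have a3 := abs_nonneg (u' x)
    have a4 := abs_nonneg (v' x)
    refine ⟨?_, ?_, ?_, ?_⟩ <;> linarith
  have hM0 : 0 ≤ M := (abs_nonneg _).trans (hM 0 ⟨le_rfl, hL.le⟩).1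
  set w := |u 0 * v' 0 - v 0 * u' 0| with hw
  have hw0 : 0 < w := abs_pos.2 hW0
  have hl : 0 < (1 - |lam|) ^ 2 := by
    have : 1 - |lam| ≠ 0 := fun h => hlam (by linarith)
    positivity
  have hm : 0 < (1 - |mu|) ^ 2 := by
    have : 1 - |mu| ≠ 0 := fun h => hmu (by linarith)
    positivity
  -- `D₁` and `D₂` bound the squared `ℓ²` norms of the Wronskian sequences in terms of `∫ h²`
  set D₁ := M ^ 2 * L / (1 - |lam|) ^ 2
  set D₂ := M ^ 2 * L / (1 - |mu|) ^ 2
  refine ⟨L * (3 * M ^ 2 / w ^ 2 * (D₁ + D₂ + 4 * M ^ 2 * L)), by positivity, ?_⟩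
  intro g g1 h hsol hh hg2 hh2
  let gn : ℤ → ℝ → ℝ := fun n x => g (x + n * L)
  let g1n : ℤ → ℝ → ℝ := fun n x => g1 (x + n * L)
  let hn : ℤ → ℝ → ℝ := fun n x => h (x + n * L)
  have sn : ∀ n, IsSol q (hn n) 0 L (gn n) (g1n n) := fun n =>
    (hsol _ _).comp_add (n * L) (fun x => hper.int_mul n x)
  have hhn : ∀ n s t, IntervalIntegrable (hn n) volume s t := fun n s t => by
    simpa using (hh (s + n * L) (t + n * L)).comp_add_right (n * L)
  have hhn2 : ∀ n, IntervalIntegrable (fun x => hn n x ^ 2) volume 0 L := fun n =>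
    ((hh2.comp_add_right (n * L)).intervalIntegrable)
  have cgn : ∀ n, Continuous (gn n) := fun n => (sn n).cu
  have Hs := hasSum_cells hL hh2
  have Gs := hasSum_cells hL hg2
  let H : ℤ → ℝ := fun n => ∫ x in (0:ℝ)..L, hn n x ^ 2
  let A : ℤ → ℝ := fun n => ∫ x in (0:ℝ)..L, gn n x ^ 2
  change HasSum H _ at Hs
  change HasSum A _ at Gs
  let β : ℤ → ℝ := fun n => ∫ x in (0:ℝ)..L, |hn n x|
  let α : ℤ → ℝ := fun n => ∫ x in (0:ℝ)..L, |gn n x|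
  have hβ : ∀ n, β n ^ 2 ≤ L * H n := fun n => sq_integral_abs_le hL (hhn n _ _) (hhn2 n)
  have hα : ∀ n, α n ^ 2 ≤ L * A n := fun n => sq_integral_abs_le hL
    ((cgn n).intervalIntegrable _ _) (((cgn n).pow 2).intervalIntegrable _ _)
  -- both Wronskian sequences are square summable and obey a contracting or expanding recursion
  have main : ∀ (nu : ℝ) (u v : ℝ → ℝ), IsSol q 0 0 L u v → (∀ x ∈ Icc 0 L, |u x| ≤ M) →
      (∀ x ∈ Icc 0 L, |v x| ≤ M) → u L = nu * u 0 → v L = nu * v 0 → 0 < (1 - |nu|) ^ 2 →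
      Summable (fun n => (gn n 0 * v 0 - g1n n 0 * u 0) ^ 2) ∧
      ∑' n, (gn n 0 * v 0 - g1n n 0 * u 0) ^ 2 ≤ M ^ 2 * L / (1 - |nu|) ^ 2 * ∫ x, h x ^ 2 := by
    intro nu u v hu hMu hMv uL vL hnu
    set z : ℤ → ℝ := fun n => gn n 0 * v 0 - g1n n 0 * u 0 with hz
    have hzs : Summable (fun n => z n ^ 2) := by
      set c₁ := (2 * L ^ 2 + L) * M
      set c₂ := L ^ 3 / 6
      have hc₂ : 0 < c₂ := by positivity
      refine Summable.of_nonneg_of_le (fun n => sq_nonneg _) (fun n => ?_)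
        ((Gs.summable.mul_left (2 * (c₁ / c₂) ^ 2 * L)).add
          (Hs.summable.mul_left (2 * M ^ 2 * L)))
      have b := cell_wronskian_start_le hL hq (hhn n) hu (sn n) hMu hMv
      change |z n| * c₂ ≤ c₁ * α n + c₂ * (M * β n) at b
      have b' : |z n| ≤ c₁ / c₂ * α n + M * β n := by
        have e : c₁ / c₂ * α n + M * β n = (c₁ * α n + c₂ * (M * β n)) / c₂ := by field_simp
        rw [e, le_div_iff₀ hc₂]; exact b
      calc z n ^ 2 = |z n| ^ 2 := (sq_abs _).symm
        _ ≤ (c₁ / c₂ * α n + M * β n) ^ 2 := pow_le_pow_left₀ (abs_nonneg _) b' 2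
        _ ≤ 2 * (c₁ / c₂) ^ 2 * α n ^ 2 + 2 * M ^ 2 * β n ^ 2 := by
          nlinarith [sq_nonneg (c₁ / c₂ * α n - M * β n)]
        _ ≤ 2 * (c₁ / c₂) ^ 2 * (L * A n) + 2 * M ^ 2 * (L * H n) := by
          gcongr
          · exact hα n
          · exact hβ n
        _ = _ := by ring
    refine ⟨hzs, ?_⟩
    have hf : ∀ n, (nu * z (n + 1) - z n) ^ 2 ≤ M ^ 2 * L * H n := by
      intro n
      have b := cell_wronskian_le hq (hhn n) hu (sn n) hMu (x := L) ⟨hL.le, le_rfl⟩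
      have e1 : gn n L = gn (n + 1) 0 := by
        simp only [gn]; congr 1; push_cast; ring
      have e2 : g1n n L = g1n (n + 1) 0 := by
        simp only [g1n]; congr 1; push_cast; ring
      have e : gn n L * v L - g1n n L * u L - (gn n 0 * v 0 - g1n n 0 * u 0)
          = nu * z (n + 1) - z n := by
        rw [e1, e2, uL, vL]; simp only [hz]; ring
      rw [e] at b
      change _ ≤ M * β n at b
      calc (nu * z (n + 1) - z n) ^ 2 = |nu * z (n + 1) - z n| ^ 2 := (sq_abs _).symm
        _ ≤ (M * β n) ^ 2 := pow_le_pow_left₀ (abs_nonneg _) b 2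
        _ = M ^ 2 * β n ^ 2 := by ring
        _ ≤ M ^ 2 * (L * H n) := by gcongr; exact hβ n
        _ = _ := by ring
    have hfs : Summable (fun n => (nu * z (n + 1) - z n) ^ 2) :=
      Summable.of_nonneg_of_le (fun n => sq_nonneg _) hf (Hs.summable.mul_left _)
    have r := l2_recursion (lam := nu) hzs hfs (fun n => by ring)
    have r2 := hfs.tsum_le_tsum hf (Hs.summable.mul_left _)
    rw [tsum_mul_left, Hs.tsum_eq] at r2
    rw [div_mul_eq_mul_div, le_div_iff₀ hnu, mul_comm]
    exact r.trans r2
  obtain ⟨s₁, t₁⟩ := main lam u v hu (fun x hx => (hM x hx).1) (fun x hx => (hM x hx).2.1) uL vL hl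
  obtain ⟨s₂, t₂⟩ := main mu u' v' hu' (fun x hx => (hM x hx).2.2.1)
    (fun x hx => (hM x hx).2.2.2) uL' vL' hm
  set z : ℤ → ℝ := fun n => gn n 0 * v 0 - g1n n 0 * u 0 with hz
  set z' : ℤ → ℝ := fun n => gn n 0 * v' 0 - g1n n 0 * u' 0 with hz'
  have hA : ∀ n, A n ≤ L * (3 * M ^ 2 / w ^ 2 * (z n ^ 2 + z' n ^ 2 + 4 * M ^ 2 * L * H n)) := by
    intro n
    have hb : ∀ x ∈ Icc 0 L, gn n x ^ 2 ≤
        3 * M ^ 2 / w ^ 2 * (z n ^ 2 + z' n ^ 2 + 4 * M ^ 2 * L * H n) := by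
      intro x hx
      have b := cell_bound hq (hhn n) hu hu' (sn n) (fun x hx => (hM x hx).1)
        (fun x hx => (hM x hx).2.2.1) hx
      change |gn n x| * w ≤ M * (|z n| + |z' n| + 2 * (M * β n)) at b
      rw [div_mul_eq_mul_div, le_div_iff₀ (by positivity)]
      calc gn n x ^ 2 * w ^ 2 = (|gn n x| * w) ^ 2 := by rw [mul_pow, sq_abs (gn n x)]
        _ ≤ (M * (|z n| + |z' n| + 2 * (M * β n))) ^ 2 :=
          pow_le_pow_left₀ (by positivity) b 2
        _ = M ^ 2 * (|z n| + |z' n| + 2 * (M * β n)) ^ 2 := by ring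
        _ ≤ M ^ 2 * (3 * (|z n| ^ 2 + |z' n| ^ 2 + (2 * (M * β n)) ^ 2)) := by
          gcongr
          nlinarith [sq_nonneg (|z n| - |z' n|), sq_nonneg (|z n| - 2 * (M * β n)),
            sq_nonneg (|z' n| - 2 * (M * β n))]
        _ = 3 * M ^ 2 * (z n ^ 2 + z' n ^ 2 + 4 * M ^ 2 * β n ^ 2) := by
          rw [sq_abs, sq_abs]; ring
        _ ≤ 3 * M ^ 2 * (z n ^ 2 + z' n ^ 2 + 4 * M ^ 2 * (L * H n)) := by
          gcongr; exact hβ n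
        _ = _ := by ring
    calc A n ≤ ∫ x in (0:ℝ)..L, 3 * M ^ 2 / w ^ 2 * (z n ^ 2 + z' n ^ 2 + 4 * M ^ 2 * L * H n) :=
          intervalIntegral.integral_mono_on hL.le (((cgn n).pow 2).intervalIntegrable _ _)
            (by simp) hb
      _ = _ := by rw [intervalIntegral.integral_const]; simp
  have sR : Summable fun n => z n ^ 2 + z' n ^ 2 + 4 * M ^ 2 * L * H n :=
    (s₁.add s₂).add (Hs.summable.mul_left _)
  calc ∫ x, g x ^ 2 = ∑' n, A n := Gs.tsum_eq.symm
    _ ≤ ∑' n, L * (3 * M ^ 2 / w ^ 2 * (z n ^ 2 + z' n ^ 2 + 4 * M ^ 2 * L * H n)) :=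
      Gs.summable.tsum_le_tsum hA ((sR.mul_left _).mul_left _)
    _ = L * (3 * M ^ 2 / w ^ 2 * (∑' n, z n ^ 2 + ∑' n, z' n ^ 2
          + 4 * M ^ 2 * L * ∫ x, h x ^ 2)) := by
      rw [tsum_mul_left, tsum_mul_left, (s₁.add s₂).tsum_add (Hs.summable.mul_left _),
        s₁.tsum_add s₂, tsum_mul_left, Hs.tsum_eq]
    _ ≤ L * (3 * M ^ 2 / w ^ 2 * (D₁ * (∫ x, h x ^ 2) + D₂ * (∫ x, h x ^ 2)
          + 4 * M ^ 2 * L * ∫ x, h x ^ 2)) :=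
      mul_le_mul_of_nonneg_left (mul_le_mul_of_nonneg_left
        (add_le_add (add_le_add t₁ t₂) le_rfl) (by positivity)) hL.le
    _ = _ := by ring

/-! ### Hyperbolic monodromy and the spectrum -/

/-- `L²_loc(ℝ)`. -/
def IsL2Loc (V : ℝ → ℝ) : Prop := ∀ R : ℝ, MemLp V 2 (volume.restrict (Icc (-R) R))

lemma exists_Icc_of_isCompact {K : Set ℝ} (hK : IsCompact K) : ∃ R : ℝ, K ⊆ Icc (-R) R := by
  obtain ⟨R, hR⟩ := hK.isBounded.subset_closedBall 0
  exact ⟨R, by simpa [Real.closedBall_eq_Icc] using hR⟩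

lemma IsL2Loc.sub_const {V : ℝ → ℝ} (hV : IsL2Loc V) (E : ℝ) : IsL2Loc (fun x => V x - E) :=
  fun R => (hV R).sub (memLp_const E)

lemma IsL2Loc.mul {q g : ℝ → ℝ} (hq : IsL2Loc q) (hg : IsL2Loc g) :
    LocallyIntegrable (fun x => q x * g x) volume := by
  rw [locallyIntegrable_iff]
  intro K hK
  obtain ⟨R, hR⟩ := exists_Icc_of_isCompact hK
  exact IntegrableOn.mono_set ((hq R).integrable_mul (hg R)) hR

lemma IsL2Loc.locallyIntegrable {q : ℝ → ℝ} (hq : IsL2Loc q) : LocallyIntegrable q volume := by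
  have := hq.mul (g := fun _ => 1) (fun R => memLp_const 1)
  simpa using this

lemma IsL2Loc.intervalIntegrable {q : ℝ → ℝ} (hq : IsL2Loc q) (s t : ℝ) :
    IntervalIntegrable q volume s t :=
  (hq.locallyIntegrable.integrableOn_isCompact isCompact_uIcc).intervalIntegrable

lemma IsL2Loc.of_memLp {g : ℝ → ℝ} (hg : MemLp g 2 volume) : IsL2Loc g := fun _ => hg.restrict _

lemma IsTest.memLp {φ : ℝ → ℝ} (h : IsTest φ) : MemLp φ 2 volume :=
  h.continuous.memLp_of_hasCompactSupport h.2

lemma IsTest.memLp_mul {q φ : ℝ → ℝ} (h : IsTest φ) (hq : IsL2Loc q) :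
    MemLp (fun x => q x * φ x) 2 volume := by
  obtain ⟨R, hR⟩ := exists_Icc_of_isCompact h.2
  obtain ⟨C, hC⟩ := h.2.exists_bound_of_continuous h.continuous
  have hi : MemLp ((Icc (-R) R).indicator q) 2 volume :=
    (memLp_indicator_iff_restrict measurableSet_Icc).2 (hq R)
  refine hi.of_le_mul (c := C) ?_ ?_
  · exact hq.locallyIntegrable.aestronglyMeasurable.mul h.continuous.aestronglyMeasurable
  · filter_upwards with x
    by_cases hx : x ∈ Icc (-R) R
    · rw [indicator_of_mem hx, norm_mul, mul_comm]
      exact mul_le_mul_of_nonneg_right (hC x) (norm_nonneg _)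
    · have : φ x = 0 := image_eq_zero_of_notMem_tsupport (fun h => hx (hR h))
      simp [this, hx]

lemma IsTest.memLp_op {q φ : ℝ → ℝ} (h : IsTest φ) (hq : IsL2Loc q) :
    MemLp (fun x => -(_root_.deriv (_root_.deriv φ) x) + q x * φ x) 2 volume :=
  h.deriv.deriv.memLp.neg.add (h.memLp_mul hq)

lemma inner_toLp {f : ℝ → ℝ} (hf : MemLp f 2 volume) (g : L2R) :
    inner ℝ (hf.toLp f) g = ∫ x, g x * f x := by
  rw [L2.inner_def]
  apply integral_congr_ae
  filter_upwards [hf.coeFn_toLp] with x hx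
  simp [hx]

lemma weak_iff {V : ℝ → ℝ} {E : ℝ} (hV : IsL2Loc V) (g h : L2R) :
    WeakSchrodingerEq V E g h ↔ ∀ φ (hφ : IsTest φ),
      inner ℝ ((hφ.memLp_op (hV.sub_const E)).toLp _) g = inner ℝ (hφ.memLp.toLp φ) h := by
  simp only [inner_toLp]
  exact ⟨fun H φ hφ => H φ hφ.1 hφ.2, fun H φ h1 h2 => H φ ⟨h1, h2⟩⟩

lemma test_symm {φ θ : ℝ → ℝ} (hφ : IsTest φ) (hθ : IsTest θ) :
    ∫ x, φ x * deriv (deriv θ) x = ∫ x, deriv (deriv φ) x * θ x := by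
  have key : ∀ φ : ℝ → ℝ, IsTest φ → ∀ s x, φ x = φ s + ∫ t in s..x, deriv φ t := by
    intro φ hφ s x
    rw [intervalIntegral.integral_deriv_eq_sub
      (fun y _ => (hφ.1.differentiable (by simp)) y)
      (hφ.deriv.continuous.intervalIntegrable _ _)]
    ring
  have h1 := ibp_test (fun a b => hφ.deriv.continuous.intervalIntegrable a b) (key φ hφ) hθ.deriv
  have h2 := ibp_test (fun a b => hφ.deriv.deriv.continuous.intervalIntegrable a b)
    (key _ hφ.deriv) hθ
  linarith

/-- The operator is symmetric on test functions. -/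
lemma weak_test {V : ℝ → ℝ} {E : ℝ} (hV : IsL2Loc V) {φ : ℝ → ℝ} (hφ : IsTest φ) :
    WeakSchrodingerEq V E (hφ.memLp.toLp φ) ((hφ.memLp_op (hV.sub_const E)).toLp _) := by
  intro θ h1 h2
  have hθ : IsTest θ := ⟨h1, h2⟩
  have e1 : ∫ x, (hφ.memLp.toLp φ) x * (-(deriv (deriv θ) x) + (V x - E) * θ x)
      = ∫ x, φ x * (-(deriv (deriv θ) x) + (V x - E) * θ x) := by
    apply integral_congr_ae
    filter_upwards [hφ.memLp.coeFn_toLp] with x hx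
    rw [hx]
  have e2 : ∫ x, ((hφ.memLp_op (hV.sub_const E)).toLp _) x * θ x
      = ∫ x, (-(deriv (deriv φ) x) + (V x - E) * φ x) * θ x := by
    apply integral_congr_ae
    filter_upwards [(hφ.memLp_op (hV.sub_const E)).coeFn_toLp] with x hx
    rw [hx]
  rw [e1, e2]
  have i1 : Integrable (fun x => φ x * deriv (deriv θ) x) :=
    hθ.deriv.deriv.integrable_mul hφ.continuous.locallyIntegrable
  have i2 : Integrable (fun x => deriv (deriv φ) x * θ x) :=
    hθ.integrable_mul hφ.deriv.deriv.continuous.locallyIntegrable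
  have i3 : Integrable (fun x => (V x - E) * φ x * θ x) :=
    hθ.integrable_mul (IsL2Loc.of_memLp (hφ.memLp_mul (hV.sub_const E))).locallyIntegrable
  have a1 : ∀ x, φ x * (-(deriv (deriv θ) x) + (V x - E) * θ x)
      = (V x - E) * φ x * θ x - φ x * deriv (deriv θ) x := fun x => by ring
  have a2 : ∀ x, (-(deriv (deriv φ) x) + (V x - E) * φ x) * θ x
      = (V x - E) * φ x * θ x - deriv (deriv φ) x * θ x := fun x => by ring
  simp_rw [a1, a2]
  rw [integral_sub i3 i1, integral_sub i3 i2, test_symm hφ hθ]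

lemma norm_sq_L2R (g : L2R) : ‖g‖ ^ 2 = ∫ x, g x ^ 2 := by
  rw [← real_inner_self_eq_norm_sq, L2.inner_def]
  congr 1; ext x; simp [sq]

/-- If every weak solution of `(L_V - E) g = h` obeys `‖g‖ ≤ C ‖h‖`, then `E` is not in the
spectrum: the graph of the weak operator is closed, so its range is closed, and the range is dense
because its orthogonal complement consists of weak solutions with right-hand side `0`. -/
theorem notMem_spectrum_of_bound {V : ℝ → ℝ} {E C : ℝ} (hV : IsL2Loc V)
    (hb : ∀ g h : L2R, WeakSchrodingerEq V E g h → ‖g‖ ≤ C * ‖h‖) : E ∉ ContSpectrum V := by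
  let F : ∀ φ : ℝ → ℝ, IsTest φ → L2R := fun φ hφ => (hφ.memLp_op (hV.sub_const E)).toLp _
  let Γ : Submodule ℝ (L2R × L2R) :=
    { carrier := {p | WeakSchrodingerEq V E p.2 p.1}
      add_mem' := by
        intro p r hp hr
        simp only [mem_ofPred_eq, weak_iff hV] at hp hr ⊢
        intro φ hφ
        rw [Prod.snd_add, Prod.fst_add, inner_add_right, inner_add_right, hp φ hφ, hr φ hφ]
      zero_mem' := by
        simp only [mem_ofPred_eq, weak_iff hV]
        intro φ hφ; simp
      smul_mem' := by
        intro c p hp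
        simp only [mem_ofPred_eq, weak_iff hV] at hp ⊢
        intro φ hφ
        rw [Prod.smul_snd, Prod.smul_fst, inner_smul_right, inner_smul_right, hp φ hφ] }
  have hΓ : ∀ p : L2R × L2R, p ∈ Γ ↔ WeakSchrodingerEq V E p.2 p.1 := fun p => Iff.rfl
  have hcl : IsClosed (Γ : Set (L2R × L2R)) := by
    have : (Γ : Set (L2R × L2R)) = ⋂ (φ : ℝ → ℝ) (hφ : IsTest φ),
        {p | inner ℝ (F φ hφ) p.2 = inner ℝ (hφ.memLp.toLp φ) p.1} := by
      ext p
      simp only [SetLike.mem_coe, hΓ, weak_iff hV, mem_iInter, mem_ofPred_eq, F]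
    rw [this]
    refine isClosed_iInter fun φ => isClosed_iInter fun hφ => isClosed_eq ?_ ?_
    · exact continuous_const.inner continuous_snd
    · exact continuous_const.inner continuous_fst
  have : CompleteSpace Γ := hcl.completeSpace_coe
  let f : Γ →L[ℝ] L2R := (ContinuousLinearMap.fst ℝ L2R L2R).comp Γ.subtypeL
  have hanti : AntilipschitzWith (Real.toNNReal (max 1 C)) f := by
    apply ContinuousLinearMap.antilipschitz_of_bound
    intro p
    rw [Real.coe_toNNReal _ (le_max_of_le_left zero_le_one)]
    have h2 := hb _ _ ((hΓ p.1).1 p.2)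
    change ‖p.1‖ ≤ max 1 C * ‖p.1.1‖
    rw [Prod.norm_def]
    apply max_le
    · exact le_mul_of_one_le_left (norm_nonneg _) (le_max_left _ _)
    · exact h2.trans (mul_le_mul_of_nonneg_right (le_max_right _ _) (norm_nonneg _))
  have hker : LinearMap.ker (f : Γ →ₗ[ℝ] L2R) = ⊥ := LinearMap.ker_eq_bot.2 hanti.injective
  have hrc : IsClosed (Set.range f) := hanti.isClosed_range f.uniformContinuous
  have hrange : LinearMap.range (f : Γ →ₗ[ℝ] L2R) = ⊤ := by
    have hrc' : IsClosed ((LinearMap.range (f : Γ →ₗ[ℝ] L2R) : Submodule ℝ L2R) : Set L2R) := by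
      rw [LinearMap.coe_range]; exact hrc
    have : CompleteSpace (LinearMap.range (f : Γ →ₗ[ℝ] L2R)) := hrc'.completeSpace_coe
    rw [← Submodule.orthogonal_eq_bot_iff, Submodule.eq_bot_iff]
    intro k hk
    have hw : WeakSchrodingerEq V E k 0 := by
      rw [weak_iff hV]
      intro φ hφ
      rw [inner_zero_right]
      rw [Submodule.mem_orthogonal] at hk
      exact hk _ ⟨⟨(F φ hφ, hφ.memLp.toLp φ), weak_test hV hφ⟩, rfl⟩
    have := hb _ _ hw
    simpa using this
  let e : Γ ≃L[ℝ] L2R := ContinuousLinearEquiv.ofBijective f hker hrange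
  have he : ∀ x, (e.symm x).1.1 = x := fun x => e.apply_symm_apply x
  intro hE
  apply hE
  refine ⟨((ContinuousLinearMap.snd ℝ L2R L2R).comp Γ.subtypeL).comp (e.symm : L2R →L[ℝ] Γ), ?_, ?_⟩
  · intro x
    have := (hΓ _).1 (e.symm x).2
    rw [he] at this
    exact this
  · intro g h hw
    have : e.symm h = ⟨(h, g), hw⟩ := by
      rw [ContinuousLinearEquiv.symm_apply_eq]; rfl
    change (e.symm h).1.2 = g
    rw [this]

/-- Energies with hyperbolic monodromy lie outside the spectrum. -/
theorem notMem_spectrum_of_hyperbolic {V : ℝ → ℝ} {E L : ℝ} (hL : 0 < L) (hV : IsL2Loc V)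
    (hper : Function.Periodic V L) {P : Matrix (Fin 2) (Fin 2) ℝ}
    (hP : Transfer (fun x => V x - E) 0 L P) (ht : 2 < |P.trace|) : E ∉ ContSpectrum V := by
  have hq := hV.sub_const E
  obtain ⟨C, hC, hap⟩ := apriori hL hq.intervalIntegrable
    (fun x => by simp only [hper x]) hP ht
  apply notMem_spectrum_of_bound (C := √C) hV
  intro g h hw
  have hg2 : IsL2Loc g := IsL2Loc.of_memLp (Lp.memLp g)
  have hh2 : IsL2Loc h := IsL2Loc.of_memLp (Lp.memLp h)
  obtain ⟨G, G1, hG, hsol⟩ := weak_regular hg2.locallyIntegrable hh2.locallyIntegrable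
    (hq.mul hg2) (fun φ hφ => hw φ hφ.1 hφ.2)
  have ig : Integrable (fun x => g x ^ 2) := (Lp.memLp g).integrable_sq
  have ih : Integrable (fun x => h x ^ 2) := (Lp.memLp h).integrable_sq
  have ee : (fun x => g x ^ 2) =ᵐ[volume] fun x => G x ^ 2 := by
    filter_upwards [hG] with x hx
    rw [hx]
  have b := hap G G1 h hsol hh2.intervalIntegrable (ig.congr ee) ih
  rw [← integral_congr_ae ee, ← norm_sq_L2R, ← norm_sq_L2R] at b
  refine (sq_le_sq₀ (norm_nonneg g) (by positivity)).1 ?_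
  rw [mul_pow, Real.sq_sqrt hC]; exact b

/-! ### Modifying letters of a word -/

lemma isL2Loc_aggC {c : ℝ} (hc : 0 < c) (Y : ℤ → L2I c) : IsL2Loc (aggC c Y) := by
  intro R
  let N : ℤ := ⌈|R| / c⌉ + 1
  let g : ℤ → ℝ → ℝ := fun j x => (Ico (0:ℝ) c).indicator (Y j) (x - j * c)
  have hg : ∀ j, MemLp (g j) 2 volume := fun j =>
    ((memLp_indicator_iff_restrict measurableSet_Ico).2 (Lp.memLp (Y j))).comp_measurePreserving
      (measurePreserving_sub_right volume (j * c))
  have hs := (memLp_finsetSum (Finset.Icc (-N) N) (fun j _ => hg j)).restrict (Icc (-R) R)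
  refine hs.ae_eq ?_
  filter_upwards [ae_restrict_mem measurableSet_Icc] with x hx
  have hfl : ∀ j : ℤ, x - j * c ∈ Ico 0 c ↔ ⌊x / c⌋ = j := by
    intro j
    rw [Int.floor_eq_iff, le_div_iff₀ hc, div_lt_iff₀ hc, mem_Ico]
    constructor
    · rintro ⟨h1, h2⟩; constructor <;> linarith
    · rintro ⟨h1, h2⟩; constructor <;> linarith
  rw [Finset.sum_eq_single ⌊x / c⌋]
  · simp only [g]
    rw [indicator_of_mem ((hfl _).2 rfl)]; rfl
  · intro j _ hj
    exact indicator_of_notMem (fun h => hj ((hfl j).1 h).symm) _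
  · intro hN
    exfalso
    apply hN
    have hx' : |x| ≤ |R| := by
      rw [abs_le]; constructor <;> linarith [hx.1, hx.2, le_abs_self R]
    have hxc : |x / c| ≤ |R| / c := by
      rw [abs_div, abs_of_pos hc]; gcongr
    have h1 := Int.le_ceil (|R| / c)
    have h2 := abs_le.1 hxc
    rw [Finset.mem_Icc]
    constructor
    · rw [Int.le_floor]; simp only [N]; push_cast; linarith
    · rw [← Int.lt_add_one_iff, Int.floor_lt]; simp only [N]; push_cast; linarith

lemma perExt_periodic {α : Type*} [Zero α] {m : ℕ} (w : Fin m → α) (n : ℤ) :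
    perExt w (n + m) = perExt w n := by
  unfold perExt
  simp only [Int.add_emod_right]

lemma perExt_of_lt {α : Type*} [Zero α] {m : ℕ} (w : Fin m → α) (n : ℕ) (hn : n < m) :
    perExt w n = w ⟨n, hn⟩ := by
  unfold perExt
  rw [dif_pos (by omega)]
  congr
  rw [Int.emod_eq_of_lt (by omega) (by omega)]
  simp

lemma aggC_periodic {c : ℝ} (hc : 0 < c) {l : ℕ} (y : Fin l → L2I c) :
    Function.Periodic (aggC c (perExt y)) (l * c) := by
  intro t
  unfold aggC
  have h1 : ⌊(t + l * c) / c⌋ = ⌊t / c⌋ + l := by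
    rw [add_div, mul_div_cancel_right₀ _ hc.ne', Int.floor_add_natCast]
  rw [h1, perExt_periodic]
  congr 1
  push_cast; ring

lemma memLp_ite {μ : Measure ℝ} [IsFiniteMeasure μ] {f : ℝ → ℝ} (hf : MemLp f 2 μ) (δ κ : ℝ) :
    MemLp (fun t => if t < δ then κ else f t) 2 μ := by
  have h := ((memLp_const κ).indicator (measurableSet_Iio (a := δ)) : MemLp _ 2 μ).add
    (hf.indicator (measurableSet_Ici (a := δ)))
  refine h.ae_eq ?_
  filter_upwards with t
  by_cases ht : t < δ
  · simp [ht]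
  · simp [ht, not_lt.1 ht]

/-- The letter obtained from `χ` by overwriting its values on `[0,δ)` with the constant `κ`. -/
def overwrite {c : ℝ} (χ : L2I c) (δ κ : ℝ) : L2I c :=
  (memLp_ite (Lp.memLp χ) δ κ).toLp _

lemma overwrite_ae {c : ℝ} (χ : L2I c) (δ κ : ℝ) :
    ∀ᵐ t ∂(volume.restrict (Ico (0:ℝ) c)),
      overwrite χ δ κ t = if t < δ then κ else χ t :=
  (memLp_ite (Lp.memLp χ) δ κ).coeFn_toLp

lemma overwrite_mem {a b : ℝ} (ha : 0 < a) (hb : 0 < b) {ψ : L2I b} {χ : L2I (a + b)}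
    (hχ : χ ∈ concatSet a b ψ) {δ : ℝ} (hδ : δ ≤ a) (κ : ℝ) :
    overwrite χ δ κ ∈ concatSet a b ψ := by
  obtain ⟨φ, h1, h2⟩ := hχ
  have h := overwrite_ae χ δ κ
  refine ⟨overwrite φ δ κ, ?_, ?_⟩
  · have h' := ae_restrict_of_ae_restrict_of_subset
      (Ico_subset_Ico_right (by linarith : a ≤ a + b)) h
    filter_upwards [h', h1, overwrite_ae φ δ κ] with t e1 e2 e3
    rw [e1, e2, e3]
  · have h' := ae_restrict_of_ae_restrict_of_subset
      (Ico_subset_Ico_left ha.le) h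
    filter_upwards [h', h2, ae_restrict_mem measurableSet_Ico] with t e1 e2 e3
    rw [e1, ← e2, if_neg (not_lt.2 (hδ.trans e3.1))]

/-- Overwriting a letter on a short interval by bounded constants moves it only slightly in `L²`. -/
lemma exists_overwrite_close {c : ℝ} (χ : L2I c) (K : ℝ) {ε : ℝ} (hε : 0 < ε) :
    ∃ δ₀ > 0, ∀ δ ≤ δ₀, 0 < δ → ∀ κ, |κ| ≤ K → dist χ (overwrite χ δ κ) < ε := by
  let μ := volume.restrict (Ico (0:ℝ) c)
  have hD : MemLp (fun t => |χ t| + K) 2 μ := (Lp.memLp χ).abs.add (memLp_const K)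
  obtain ⟨δ₀, h0, hδ₀⟩ := hD.eLpNorm_indicator_le (by norm_num) (by norm_num) (half_pos hε)
  refine ⟨δ₀, h0, fun δ hδ hδ0 κ hκ => ?_⟩
  rw [Lp.dist_def]
  have hle : eLpNorm (⇑χ - ⇑(overwrite χ δ κ)) 2 μ ≤ ENNReal.ofReal (ε / 2) := by
    refine le_trans (eLpNorm_mono_ae ?_) (hδ₀ (Iio δ) measurableSet_Iio ?_)
    · filter_upwards [overwrite_ae χ δ κ] with t ht
      rw [Pi.sub_apply, ht]
      by_cases h : t < δ
      · rw [if_pos h, indicator_of_mem (mem_Iio.2 h), Real.norm_eq_abs, Real.norm_eq_abs]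
        refine (abs_sub _ _).trans (le_trans ?_ (le_abs_self _))
        linarith
      · simp [h]
    · rw [Measure.restrict_apply measurableSet_Iio]
      calc volume (Iio δ ∩ Ico 0 c) ≤ volume (Ico 0 δ) :=
            measure_mono fun t ht => ⟨ht.2.1, ht.1⟩
        _ = ENNReal.ofReal δ := by simp
        _ ≤ _ := ENNReal.ofReal_le_ofReal hδ
  have := ENNReal.toReal_mono ENNReal.ofReal_ne_top hle
  rw [ENNReal.toReal_ofReal (half_pos hε).le] at this
  linarith

/-- Any set of letters that is stable under overwriting short initial pieces by constants is
gap-rich, with no exceptional energies. -/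
theorem gapRich_of_overwrite {a c : ℝ} (ha : 0 < a) (hac : a ≤ c) {W : Set (L2I c)}
    (hW : ∀ χ ∈ W, ∀ δ ≤ a, ∀ κ : ℝ, overwrite χ δ κ ∈ W) : GapRichC c W (∅ : Set ℝ) := by
  have hc : 0 < c := ha.trans_le hac
  refine ⟨fun x hx => by simp [AccPt, Filter.neBot_iff] at hx, ?_⟩
  intro E _ m hm x hx ε hε
  have hmR : (0 : ℝ) < m := by exact_mod_cast hm
  have hm1 : (1 : ℝ) ≤ m := by exact_mod_cast hm
  let x₀ := x ⟨0, hm⟩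
  obtain ⟨δ₀, hδ₀, hclose⟩ := exists_overwrite_close x₀ (|E| + 4) hε
  let δ := min δ₀ a
  have hδ : 0 < δ := lt_min hδ₀ ha
  have hδa : δ ≤ a := min_le_right _ _
  have hδc : δ ≤ c := hδa.trans hac
  have hcmc : c ≤ m * c := le_mul_of_one_le_left hc.le hm1
  -- the transfer matrix of the unmodified part `[δ, m c)` of the block
  obtain ⟨R, hR⟩ := exists_transfer ((isL2Loc_aggC hc (perExt x)).sub_const E).intervalIntegrable
    (hδc.trans hcmc)
  have hRdet := hR.det (hδc.trans hcmc)
    ((isL2Loc_aggC hc (perExt x)).sub_const E).intervalIntegrable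
  obtain ⟨ωA, hA, ωB, hB, n, htr⟩ := exists_hyperbolic hδ R hRdet
  let ω : ℕ → ℝ := fun k => if k < n then ωA else ωB
  have hω : ∀ k, ω k ∈ Icc (1:ℝ) 2 := fun k => by
    simp only [ω]; split_ifs
    · exact hA
    · exact hB
  -- the `i`-th letter of the new word
  let Y : ℕ → L2I c := fun i =>
    if i % m = 0 then overwrite x₀ δ (E - ω (i / m) ^ 2) else x ⟨i % m, Nat.mod_lt _ hm⟩
  let l := (n + 1) * m
  have hl : 0 < l := Nat.mul_pos n.succ_pos hm
  let y : Fin l → L2I c := fun i => Y i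
  have hYc : ∀ i, Y i ∈ W := by
    intro i
    simp only [Y]
    split_ifs
    · exact hW _ (hx _) _ hδa _
    · exact hx _
  have hYd : ∀ i, dist (x ⟨i % m, Nat.mod_lt _ hm⟩) (Y i) < ε := by
    intro i
    simp only [Y]
    split_ifs with h
    · have : x ⟨i % m, Nat.mod_lt _ hm⟩ = x₀ := by simp only [x₀]; congr
      rw [this]
      apply hclose δ (min_le_left _ _) hδ
      have := hω (i / m)
      refine (abs_sub _ _).trans ?_
      rw [abs_of_nonneg (sq_nonneg (ω (i / m)))]
      nlinarith [this.1, this.2]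
    · simpa using hε
  refine ⟨l, hl, y, fun i => hYc i, ?_, ?_⟩
  · intro j
    have hl0 : (0 : ℤ) < l := by exact_mod_cast hl
    have hm0 : (0 : ℤ) < m := by exact_mod_cast hm
    obtain ⟨i, hi⟩ := Int.eq_ofNat_of_zero_le (Int.emod_nonneg j hl0.ne')
    have hmod : j % (m : ℤ) = (i : ℤ) % m := by
      rw [← hi]
      exact (Int.emod_emod_of_dvd j (by simp only [l]; push_cast; exact dvd_mul_left _ _)).symm
    have e1 : perExt x j = x ⟨i % m, Nat.mod_lt _ hm⟩ := by
      unfold perExt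
      rw [dif_pos hm]
      congr
      rw [hmod]; omega
    have e2 : perExt y j = Y i := by
      unfold perExt
      rw [dif_pos hl]
      simp only [y]
      congr
      rw [hi]; simp
    rw [e1, e2]
    exact hYd i
  · let V := aggC c (perExt y)
    have hV : IsL2Loc V := isL2Loc_aggC hc _
    have hq := (hV.sub_const E).intervalIntegrable
    have hlc : (l : ℝ) * c = n * (m * c) + m * c := by simp only [l]; push_cast; ring
    -- on the `k`-th block, the potential is that of `x`, overwritten near the left end
    have hblock : ∀ k ≤ n, ∀ᵐ s, s ∈ Ioo 0 (m * c) →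
        V (s + k * (m * c)) = if s < δ then E - ω k ^ 2 else aggC c (perExt x) s := by
      intro k hk
      have hov := overwrite_ae x₀ δ (E - ω k ^ 2)
      rw [ae_restrict_iff' measurableSet_Ico] at hov
      filter_upwards [hov] with s hs hsm
      have hs0 : 0 ≤ s / c := div_nonneg hsm.1.le hc.le
      obtain ⟨i, hi⟩ := Int.eq_ofNat_of_zero_le (Int.floor_nonneg.2 hs0)
      have hfl := (Int.floor_eq_iff.1 hi)
      have him : i < m := by
        have : (i : ℝ) < m := lt_of_le_of_lt (by exact_mod_cast hfl.1)
          ((div_lt_iff₀ hc).2 hsm.2)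
        exact_mod_cast this
      have hfl2 : ⌊(s + k * (m * c)) / c⌋ = ((k * m + i : ℕ) : ℤ) := by
        have : (s + k * (m * c)) / c = s / c + ((k * m : ℕ) : ℝ) := by
          push_cast; field_simp
        rw [this, Int.floor_add_natCast, hi]; push_cast; ring
      have hil : k * m + i < l := by
        simp only [l]; nlinarith
      have hVs : V (s + k * (m * c)) = Y (k * m + i) (s - i * c) := by
        simp only [V, aggC]
        rw [hfl2, perExt_of_lt y _ hil]
        simp only [y]
        congr 1
        push_cast; ring
      have hXs : aggC c (perExt x) s = x ⟨i, him⟩ (s - i * c) := by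
        simp only [aggC]
        rw [hi, perExt_of_lt x _ him]
        simp
      rw [hVs, hXs]
      have hmodi : (k * m + i) % m = i := by
        rw [Nat.mul_add_mod_self_right, Nat.mod_eq_of_lt him]
      have hdivi : (k * m + i) / m = k := by
        rw [Nat.add_div_of_dvd_right (dvd_mul_left _ _), Nat.mul_div_cancel _ hm,
          Nat.div_eq_of_lt him, add_zero]
      simp only [Y, hmodi, hdivi]
      by_cases h0 : i = 0
      · subst h0
        have hsc : s < c := by
          have := hfl.2
          rw [div_lt_iff₀ hc] at this
          simpa using this
        simp only [if_true, Nat.cast_zero, zero_mul, sub_zero]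
        exact hs ⟨hsm.1.le, hsc⟩
      · rw [if_neg h0, if_neg]
        rw [not_lt]
        have h1 : (1 : ℝ) ≤ i := by exact_mod_cast Nat.one_le_iff_ne_zero.2 h0
        have : (1 : ℝ) ≤ s / c := h1.trans (by exact_mod_cast hfl.1)
        rw [le_div_iff₀ hc] at this
        linarith
    have hblockT : ∀ k ≤ n, Transfer (fun t => V t - E) (k * (m * c)) (k * (m * c) + m * c)
        (R * freeTM δ (ω k)) := by
      intro k hk
      have t1 : Transfer (fun t => V t - E) (0 + k * (m * c)) (δ + k * (m * c))
          (freeTM δ (ω k)) := by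
        refine (transfer_free (by linarith [(hω k).1])).shift _ ?_
        filter_upwards [hblock k hk] with s hs hs'
        rw [hs ⟨hs'.1, lt_of_lt_of_le hs'.2 (hδc.trans hcmc)⟩, if_pos hs'.2]; ring
      have t2 : Transfer (fun t => V t - E) (δ + k * (m * c)) (m * c + k * (m * c)) R := by
        refine hR.shift _ ?_
        filter_upwards [hblock k hk] with s hs hs'
        rw [hs ⟨hδ.trans hs'.1, hs'.2⟩, if_neg (not_lt.2 hs'.1.le)]
      have := t1.comp (by linarith) (by linarith) hq t2
      rwa [zero_add, add_comm (m * c)] at this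
    have hpow : ∀ k ≤ n, Transfer (fun t => V t - E) 0 (k * (m * c)) ((R * freeTM δ ωA) ^ k) := by
      intro k
      induction k with
      | zero => intro _; simpa using Transfer.refl _ 0
      | succ k ih =>
        intro hk
        have t := hblockT k (by omega)
        have hωk : ω k = ωA := if_pos (by omega)
        rw [hωk] at t
        have := (ih (by omega)).comp (by positivity) (by nlinarith) hq t
        rw [← pow_succ'] at this
        convert this using 1
        push_cast; ring
    have hωn : ω n = ωB := if_neg (lt_irrefl n)
    have hfin := (hpow n le_rfl).comp (by positivity) (by nlinarith) hq (hblockT n le_rfl)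
    rw [hωn, ← hlc] at hfin
    exact notMem_spectrum_of_hyperbolic (by positivity) hV (aggC_periodic hc y) hfin htr

/-- Fix `a, b > 0` and `ψ ∈ L²([0,b))`. The set
`{φ♯ψ : φ ∈ L²([0,a))} ⊆ L²([0,a+b))` is gap-rich with empty exceptional set. -/
theorem concat_fixed_tail_gapRich (a b : ℝ) (ha : 0 < a) (hb : 0 < b) (ψ : L2I b) :
    GapRichC (a + b) (concatSet a b ψ) (∅ : Set ℝ) := by
  exact gapRich_of_overwrite ha (by linarith)
    (fun _ hχ _ hδ κ => overwrite_mem ha hb hχ hδ κ)
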